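/- Suppose g(r) = o(r^{-c}) as r → ∞ for some c > 3d, and fix γ > 0. Let Δ_n denote the maximum vertex degree of G_n(r̂_n(γ)). Then almost surely, liminf_{n→∞} Δ_n/(log n) ≥ γ·H₊⁻¹((c − 3d)/(γ(c − d))). -/

import Mathlib

open MeasureTheory ProbabilityTheory Filter Set

noncomputable section

namespace RCM

/-- The toroidal metric on the unit cube. -/
def torusDist {d : ℕ} (x y : EuclideanSpace ℝ (Fin d)) : ℝ :=
  ⨅ z : Fin d → ℤ, ‖x - y - (WithLp.equiv 2 (Fin d → ℝ)).symm (fun i => (z i : ℝ))‖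

/-- The half-open unit cube `S = (-1/2, 1/2]^d`. -/
def cube (d : ℕ) : Set (EuclideanSpace ℝ (Fin d)) :=
  {x | ∀ i, x i ∈ Set.Ioc (-(1/2) : ℝ) (1/2)}

/-- The random connection model: i.i.d. uniform points `X`, coupled Poisson counts `N`,
i.i.d. uniform edge variables `U`, with the three families mutually independent, and a
non-increasing connection function `g : [0,∞) → [0,1]` with finite positive integral `α`. -/
structure Model (d : ℕ) {Ω : Type*} [MeasurableSpace Ω] (P : Measure Ω) where
  g : ℝ → ℝ
  α : ℝ
  X : ℕ → Ω → EuclideanSpace ℝ (Fin d)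
  N : ℕ → Ω → ℕ
  U : ℕ → ℕ → Ω → ℝ
  g_antitone : AntitoneOn g (Set.Ici 0)
  g_mem : ∀ r : ℝ, 0 ≤ r → g r ∈ Set.Icc (0 : ℝ) 1
  g_integrable : MeasureTheory.Integrable (fun x : EuclideanSpace ℝ (Fin d) => g ‖x‖)
  α_def : α = ∫ x : EuclideanSpace ℝ (Fin d), g ‖x‖
  α_pos : 0 < α
  X_meas : ∀ i, Measurable (X i)
  X_unif : ∀ i : ℕ, 1 ≤ i → Measure.map (X i) P = volume.restrict (cube d)
  X_indep : iIndepFun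
    (fun i : {i : ℕ // 1 ≤ i} => X i) P
  N_meas : ∀ n, Measurable (N n)
  N_mono : ∀ ω, Monotone fun n => N n ω
  N_poisson : ∀ n k : ℕ,
    P {ω | N n ω = k} = ENNReal.ofReal (Real.exp (-(n : ℝ)) * (n : ℝ) ^ k / k.factorial)
  U_meas : ∀ i j, Measurable (U i j)
  U_unif : ∀ i j : ℕ, 1 ≤ i → i < j →
    Measure.map (U i j) P = volume.restrict (Set.Icc (0 : ℝ) 1)
  U_indep : iIndepFun
    (fun p : {p : ℕ × ℕ // 1 ≤ p.1 ∧ p.1 < p.2} => U p.1.1 p.1.2) P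
  families_indep : iIndep
    (![MeasurableSpace.comap (fun ω => fun i : ℕ => X i ω) inferInstance,
       MeasurableSpace.comap (fun ω => fun n : ℕ => N n ω) inferInstance,
       MeasurableSpace.comap (fun ω => fun p : ℕ × ℕ => U p.1 p.2 ω) inferInstance]) P

variable {d : ℕ} {Ω : Type*} [MeasurableSpace Ω] {P : Measure Ω}

/-- Adjacency in the graph `G_n(r)`: vertices `1 ≤ i,j ≤ N_n` are joined iff
`U_{ij} ≤ g(dist(X_i,X_j)/r)`. -/
def adj (M : Model d P) (n : ℕ) (r : ℝ) (ω : Ω) (i j : ℕ) : Prop :=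
  i ≠ j ∧ 1 ≤ i ∧ 1 ≤ j ∧ i ≤ M.N n ω ∧ j ≤ M.N n ω ∧
    M.U (min i j) (max i j) ω ≤ M.g (torusDist (M.X i ω) (M.X j ω) / r)

/-- The degree of vertex `i` in `G_n(r)`. -/
def deg (M : Model d P) (n : ℕ) (r : ℝ) (ω : Ω) (i : ℕ) : ℕ :=
  {j : ℕ | adj M n r ω i j}.ncard

/-- `W_n(r)`, the number of isolated vertices of `G_n(r)`. -/
def isolatedCount (M : Model d P) (n : ℕ) (r : ℝ) (ω : Ω) : ℕ :=
  {i : ℕ | 1 ≤ i ∧ i ≤ M.N n ω ∧ deg M n r ω i = 0}.ncard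


/-- `r̂_n(γ)` defined by `r̂_n(γ)^d = γ log n / (α n)`. -/
def rhat (M : Model d P) (γ : ℝ) (n : ℕ) : ℝ :=
  (γ * Real.log n / (M.α * n)) ^ ((1 : ℝ) / d)

/-- `d_n`, the critical parameter for absence of isolated nodes. -/
def critRadius (M : Model d P) (n : ℕ) (ω : Ω) : ℝ :=
  sInf {r : ℝ | 0 < r ∧ isolatedCount M n r ω = 0}

/-- The maximum vertex degree `Δ_n` of `G_n(r)`. -/
def maxDeg (M : Model d P) (n : ℕ) (r : ℝ) (ω : Ω) : ℕ :=
  (Finset.Icc 1 (M.N n ω)).sup (deg M n r ω)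

/-- The minimum vertex degree `δ_n` of `G_n(r)`. -/
def minDeg (M : Model d P) (n : ℕ) (r : ℝ) (ω : Ω) : ℕ :=
  sInf {k : ℕ | ∃ i, 1 ≤ i ∧ i ≤ M.N n ω ∧ deg M n r ω i = k}

/-- The length (toroidal metric) of the longest edge of `G_n(r)` (`0` if there are no edges). -/
def longestEdge (M : Model d P) (n : ℕ) (r : ℝ) (ω : Ω) : ℝ :=
  sSup ({0} ∪ {t : ℝ | ∃ i j, adj M n r ω i j ∧ t = torusDist (M.X i ω) (M.X j ω)})

/-- Connectivity of `G_n(r)`: any two vertices are joined by a path. -/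
def connectedGraph (M : Model d P) (n : ℕ) (r : ℝ) (ω : Ω) : Prop :=
  ∀ i j : ℕ, 1 ≤ i → i ≤ M.N n ω → 1 ≤ j → j ≤ M.N n ω →
    Relation.ReflTransGen (adj M n r ω) i j

/-- `H(x) = 1 - x + x log x` (with `H(0) = 1`, since `log 0 = 0` in Lean). -/
def H (x : ℝ) : ℝ := 1 - x + x * Real.log x

/-- The inverse of the restriction of `H` to `[1, ∞)`. -/
def Hplusinv (y : ℝ) : ℝ := sInf {x : ℝ | 1 ≤ x ∧ y ≤ H x}

/-- The inverse of the restriction of `H` to `[0, 1]`. -/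
def Hminusinv (y : ℝ) : ℝ := sInf {x : ℝ | 0 ≤ x ∧ H x ≤ y}

/-- The standard normal distribution function. -/
def stdNormalCDF (x : ℝ) : ℝ :=
  ∫ t in Set.Iic x, Real.exp (-t ^ 2 / 2) / Real.sqrt (2 * Real.pi)

/-- The tail probability `P(Bin(b, p) ≥ t)`, defined through its one-step recursion. -/
def binTail (p : ℝ) : ℕ → ℕ → ℝ
  | _, 0 => 1
  | 0, _ + 1 => 0
  | b + 1, t + 1 => p * binTail p b t + (1 - p) * binTail p b (t + 1)

lemma binTail_zero_right (p : ℝ) (b : ℕ) : binTail p b 0 = 1 := by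
  cases b <;> rfl

lemma binTail_nonneg {p : ℝ} (h0 : 0 ≤ p) (h1 : p ≤ 1) (b t : ℕ) : 0 ≤ binTail p b t := by
  induction b generalizing t with
  | zero => cases t <;> simp [binTail]
  | succ b ih =>
    cases t with
    | zero => simp [binTail]
    | succ t =>
      have := mul_nonneg h0 (ih t)
      have := mul_nonneg (sub_nonneg.2 h1) (ih (t + 1))
      simp only [binTail]; linarith

lemma binTail_antitone_right {p : ℝ} (h0 : 0 ≤ p) (h1 : p ≤ 1) (b t : ℕ) :
    binTail p b (t + 1) ≤ binTail p b t := by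
  induction b generalizing t with
  | zero => cases t <;> simp [binTail]
  | succ b ih =>
    cases t with
    | zero =>
      have h := ih 0
      rw [binTail_zero_right] at h
      simp only [binTail, binTail_zero_right]
      nlinarith
    | succ t =>
      have h := mul_le_mul_of_nonneg_left (ih t) h0
      have h' := mul_le_mul_of_nonneg_left (ih (t + 1)) (sub_nonneg.2 h1)
      simp only [binTail]; linarith

lemma binTail_ge {p : ℝ} (h0 : 0 ≤ p) (h1 : p ≤ 1) (b t : ℕ) :
    (b.choose t : ℝ) * p ^ t * (1 - p) ^ b ≤ binTail p b t := by
  have h1' : 0 ≤ 1 - p := sub_nonneg.2 h1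
  induction b generalizing t with
  | zero => cases t <;> simp [binTail]
  | succ b ih =>
    cases t with
    | zero => simpa [binTail] using pow_le_one₀ h1' (by linarith)
    | succ t =>
      have e1 := mul_le_mul_of_nonneg_left (ih t) h0
      have e2 := mul_le_mul_of_nonneg_left (ih (t + 1)) h1'
      have e3 : (b.choose t : ℝ) * p ^ (t + 1) * (1 - p) ^ (b + 1)
          ≤ p * ((b.choose t : ℝ) * p ^ t * (1 - p) ^ b) := by
        have : (b.choose t : ℝ) * p ^ (t + 1) * (1 - p) ^ (b + 1)
          = (p * ((b.choose t : ℝ) * p ^ t * (1 - p) ^ b)) * (1 - p) := by ring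
        rw [this]
        exact mul_le_of_le_one_right (by positivity) (by linarith)
      have e4 : ((b + 1).choose (t + 1) : ℝ) = b.choose t + b.choose (t + 1) := by
        rw [Nat.choose_succ_succ]; push_cast; rfl
      simp only [binTail]
      rw [e4]
      calc _ = (b.choose t : ℝ) * p ^ (t + 1) * (1 - p) ^ (b + 1)
            + (1 - p) * ((b.choose (t + 1) : ℝ) * p ^ (t + 1) * (1 - p) ^ b) := by ring
        _ ≤ _ := by linarith

lemma binTail_le {p : ℝ} (h0 : 0 ≤ p) (h1 : p ≤ 1) (b t : ℕ) :
    binTail p b t ≤ (b.choose t : ℝ) * p ^ t := by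
  have h1' : 0 ≤ 1 - p := sub_nonneg.2 h1
  induction b generalizing t with
  | zero => cases t <;> simp [binTail]
  | succ b ih =>
    cases t with
    | zero => simp [binTail]
    | succ t =>
      have e1 := mul_le_mul_of_nonneg_left (ih t) h0
      have e2 := mul_le_mul_of_nonneg_left (ih (t + 1)) h1'
      have e3 : 0 ≤ p * ((b.choose (t + 1) : ℝ) * p ^ (t + 1)) := by positivity
      have e4 : ((b + 1).choose (t + 1) : ℝ) = b.choose t + b.choose (t + 1) := by
        rw [Nat.choose_succ_succ]; push_cast; rfl
      simp only [binTail]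
      rw [e4, add_mul]
      have : p * ((b.choose t : ℝ) * p ^ t) = (b.choose t : ℝ) * p ^ (t + 1) := by ring
      linarith

/-- The number of coordinates of `w` lying in `S`. -/
def hits {Y : Type*} (S : Set Y) {b : ℕ} (w : Fin b → Y) : ℕ :=
  ∑ j, S.indicator (fun _ => 1) (w j)

lemma hits_cons {Y : Type*} (S : Set Y) {b : ℕ} (y : Y) (w : Fin b → Y) :
    hits S (Fin.cons y w : Fin (b + 1) → Y) = S.indicator (fun _ => 1) y + hits S w := by
  simp [hits, Fin.sum_univ_succ]

section Hits

variable {Y : Type*} [MeasurableSpace Y]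

lemma measurable_hits {S : Set Y} (hS : MeasurableSet S) (b : ℕ) :
    Measurable (fun w : Fin b → Y => hits S w) :=
  Finset.measurable_fun_sum _ fun j _ =>
    (measurable_const.indicator hS).comp (measurable_pi_apply j)

lemma pi_real_succ (μ : Measure Y) [IsProbabilityMeasure μ] {b : ℕ}
    {F : Set (Fin (b + 1) → Y)} (hF : MeasurableSet F) :
    (Measure.pi fun _ => μ).real F
      = ∫ y, (Measure.pi fun _ : Fin b => μ).real {w | (Fin.cons y w : Fin (b + 1) → Y) ∈ F} ∂μ := by
  have h := (measurePreserving_piFinSuccAbove (fun _ : Fin (b + 1) => μ) 0).symm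
  have hm : MeasurableSet ((MeasurableEquiv.piFinSuccAbove (fun _ : Fin (b + 1) => Y) 0).symm ⁻¹' F) :=
    (MeasurableEquiv.measurable _) hF
  rw [← h.measureReal_preimage hF.nullMeasurableSet, measureReal_def, Measure.prod_apply hm,
    ← integral_toReal]
  · refine integral_congr_ae (Eventually.of_forall fun y => ?_)
    change _ = ((Measure.pi fun _ : Fin b => μ) _).toReal
    refine congrArg (fun A => ((Measure.pi fun _ : Fin b => μ) A).toReal) (Set.ext fun w => ?_)
    simp [MeasurableEquiv.piFinSuccAbove_symm_apply, Fin.insertNthEquiv]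
  · exact (measurable_measure_prodMk_left hm).aemeasurable
  · exact Eventually.of_forall fun y => measure_lt_top _ _

lemma integral_eq_of_piecewise {μ : Measure Y} [IsProbabilityMeasure μ] {S : Set Y}
    (hS : MeasurableSet S) (f : Y → ℝ) (a c : ℝ) (h1 : ∀ y ∈ S, f y = a)
    (h2 : ∀ y ∉ S, f y = c) : ∫ y, f y ∂μ = μ.real S * a + (1 - μ.real S) * c := by
  have : f = fun y => S.indicator (fun _ => a - c) y + c := by
    funext y
    by_cases hy : y ∈ S <;> simp [hy, h1, h2]
  rw [this, integral_add ((integrable_const _).indicator hS) (integrable_const _),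
    integral_indicator_const _ hS]
  simp; ring

lemma pi_hits_ge (μ : Measure Y) [IsProbabilityMeasure μ] {S : Set Y} (hS : MeasurableSet S)
    (b t : ℕ) :
    (Measure.pi fun _ : Fin b => μ).real {w | t ≤ hits S w} = binTail (μ.real S) b t := by
  induction b generalizing t with
  | zero => cases t <;> simp [binTail, hits]
  | succ b ih =>
    cases t with
    | zero => simp [binTail]
    | succ t =>
      rw [pi_real_succ μ (measurableSet_le measurable_const (measurable_hits hS _))]
      simp only [mem_ofPred_eq, hits_cons, binTail]
      refine integral_eq_of_piecewise hS _ _ _ (fun y hy => ?_) (fun y hy => ?_)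
      · rw [← ih]; simp [hy, Nat.lt_one_add_iff]
      · rw [← ih]; simp [hy]

/-- Counts of hits in disjoint sets are negatively correlated. -/
lemma pi_hits_ge_inter_le (μ : Measure Y) [IsProbabilityMeasure μ] {S S' : Set Y}
    (hS : MeasurableSet S) (hS' : MeasurableSet S') (hd : Disjoint S S') (b s t : ℕ) :
    (Measure.pi fun _ : Fin b => μ).real {w | s ≤ hits S w ∧ t ≤ hits S' w}
      ≤ binTail (μ.real S) b s * binTail (μ.real S') b t := by
  induction b generalizing s t with
  | zero => cases s <;> cases t <;> simp [binTail, hits]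
  | succ b ih =>
    cases s with
    | zero =>
      simp only [Nat.zero_le, true_and, binTail_zero_right, one_mul]
      exact (pi_hits_ge μ hS' _ _).le
    | succ s =>
    cases t with
    | zero =>
      simp only [Nat.zero_le, and_true, binTail_zero_right, mul_one]
      exact (pi_hits_ge μ hS _ _).le
    | succ t =>
      have hm : MeasurableSet {w : Fin (b + 1) → Y | s + 1 ≤ hits S w ∧ t + 1 ≤ hits S' w} :=
        (measurableSet_le measurable_const (measurable_hits hS _)).inter
          (measurableSet_le measurable_const (measurable_hits hS' _))
      rw [pi_real_succ μ hm]
      set F : ℕ → ℕ → ℝ := fun s t =>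
        (Measure.pi fun _ : Fin b => μ).real {w | s ≤ hits S w ∧ t ≤ hits S' w} with hF
      set p := μ.real S with hp
      set p' := μ.real S' with hp'
      have key : ∀ y, (Measure.pi fun _ : Fin b => μ).real
          {w | (Fin.cons y w : Fin (b + 1) → Y) ∈
            {w : Fin (b + 1) → Y | s + 1 ≤ hits S w ∧ t + 1 ≤ hits S' w}}
          = S.indicator (fun _ => F s (t + 1) - F (s + 1) (t + 1)) y
            + S'.indicator (fun _ => F (s + 1) t - F (s + 1) (t + 1)) y + F (s + 1) (t + 1) := by
        intro y
        by_cases hy : y ∈ S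
        · have hy' : y ∉ S' := fun h => Set.disjoint_left.1 hd hy h
          simp [hits_cons, hy, hy', hF, Nat.lt_one_add_iff]
        · by_cases hy' : y ∈ S' <;> simp [hits_cons, hy, hy', hF, Nat.lt_one_add_iff]
      simp_rw [key]
      rw [integral_add (((integrable_const _).indicator hS).add
        ((integrable_const _).indicator hS')) (integrable_const _),
        integral_add ((integrable_const _).indicator hS) ((integrable_const _).indicator hS'),
        integral_indicator_const _ hS, integral_indicator_const _ hS']
      simp only [smul_eq_mul, integral_const, probReal_univ, one_mul]
      rw [← hp, ← hp']
      have hp0 : 0 ≤ p := measureReal_nonneg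
      have hp0' : 0 ≤ p' := measureReal_nonneg
      have hp1 : p ≤ 1 := measureReal_le_one
      have hp1' : p' ≤ 1 := measureReal_le_one
      have hpp : p + p' ≤ 1 := by
        rw [hp, hp', ← measureReal_union hd hS']
        exact measureReal_le_one
      have i1 := mul_le_mul_of_nonneg_left (ih s (t + 1)) hp0
      have i2 := mul_le_mul_of_nonneg_left (ih (s + 1) t) hp0'
      have i3 := mul_le_mul_of_nonneg_left (ih (s + 1) (t + 1)) (by linarith : 0 ≤ 1 - p - p')
      have a1 := sub_nonneg.2 (binTail_antitone_right hp0 hp1 b s)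
      have a2 := sub_nonneg.2 (binTail_antitone_right hp0' hp1' b t)
      have a3 := mul_nonneg (mul_nonneg hp0 hp0') (mul_nonneg a1 a2)
      change p * F s (t + 1) ≤ _ at i1
      change p' * F (s + 1) t ≤ _ at i2
      change (1 - p - p') * F (s + 1) (t + 1) ≤ _ at i3
      simp only [binTail]
      nlinarith

end Hits

/-- Second moment bound for the probability that none of finitely many events occurs. -/
lemma measureReal_forall_notMem_le [IsProbabilityMeasure P] {ι : Type*} (A : Finset ι)
    (G : ι → Set Ω) (hG : ∀ i ∈ A, MeasurableSet (G i)) {q κ : ℝ} (hq : 0 < q) (hκ : 0 ≤ κ)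
    (hA : A.Nonempty) (h1 : ∀ i ∈ A, P.real (G i) = q)
    (h2 : ∀ i ∈ A, ∀ j ∈ A, i ≠ j → P.real (G i ∩ G j) ≤ q ^ 2 + κ * q) :
    P.real {ω | ∀ i ∈ A, ω ∉ G i} ≤ (1 + A.card * κ) / (A.card * q) := by
  classical
  set a : ℝ := (A.card : ℝ) with ha
  have ha0 : 0 < a := by rw [ha]; exact_mod_cast hA.card_pos
  set Z : Ω → ℝ := fun ω => ∑ i ∈ A, (G i).indicator (fun _ => (1 : ℝ)) ω with hZ
  have hind : ∀ i ∈ A, Integrable ((G i).indicator (fun _ => (1 : ℝ))) P := fun i hi =>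
    (integrable_const _).indicator (hG i hi)
  have hind2 : ∀ i ∈ A, ∀ j ∈ A, Integrable ((G i ∩ G j).indicator (fun _ => (1 : ℝ))) P :=
    fun i hi j hj => (integrable_const _).indicator ((hG i hi).inter (hG j hj))
  have hZZ : ∀ ω, (Z ω - a * q) ^ 2 = (∑ i ∈ A, ∑ j ∈ A, (G i ∩ G j).indicator (fun _ => (1 : ℝ)) ω)
      - 2 * a * q * Z ω + (a * q) ^ 2 := by
    intro ω
    have : (∑ i ∈ A, ∑ j ∈ A, (G i ∩ G j).indicator (fun _ => (1 : ℝ)) ω) = Z ω * Z ω := by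
      rw [hZ, Finset.sum_mul_sum]
      refine Finset.sum_congr rfl fun i _ => Finset.sum_congr rfl fun j _ => ?_
      by_cases h : ω ∈ G i <;> by_cases h' : ω ∈ G j <;> simp [h, h']
    rw [this]; ring
  have hZi : Integrable Z P := integrable_finsetSum _ hind
  have hSi : Integrable (fun ω => ∑ i ∈ A, ∑ j ∈ A, (G i ∩ G j).indicator (fun _ => (1 : ℝ)) ω) P :=
    integrable_finsetSum _ fun i hi => integrable_finsetSum _ fun j hj => hind2 i hi j hj
  have hi2 : Integrable (fun ω => (Z ω - a * q) ^ 2) P := by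
    simp_rw [hZZ]
    exact (hSi.sub (hZi.const_mul _)).add (integrable_const _)
  have hEZ : ∫ ω, Z ω ∂P = a * q := by
    rw [hZ, integral_finsetSum _ hind]
    rw [Finset.sum_congr rfl (g := fun _ => q)]
    · simp [ha]
    · intro i hi
      rw [integral_indicator_const _ (hG i hi), h1 i hi]; simp
  have hES : ∫ ω, (∑ i ∈ A, ∑ j ∈ A, (G i ∩ G j).indicator (fun _ => (1 : ℝ)) ω) ∂P
      ≤ a * (q + a * (q ^ 2 + κ * q)) := by
    rw [integral_finsetSum _ fun i hi => integrable_finsetSum _ fun j hj => hind2 i hi j hj]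
    rw [ha, ← nsmul_eq_mul A.card (q + _)]
    refine Finset.sum_le_card_nsmul _ _ _ fun i hi => ?_
    rw [integral_finsetSum _ fun j hj => hind2 i hi j hj]
    have : ∀ j ∈ A, ∫ ω, (G i ∩ G j).indicator (fun _ => (1 : ℝ)) ω ∂P
        ≤ (if i = j then q else 0) + (q ^ 2 + κ * q) := by
      intro j hj
      rw [integral_indicator_const _ ((hG i hi).inter (hG j hj)), smul_eq_mul, mul_one]
      by_cases hij : i = j
      · subst hij
        rw [inter_self, h1 i hi]
        simp only [if_true]
        have : 0 ≤ q ^ 2 + κ * q := by positivity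
        linarith
      · simpa [hij] using h2 i hi j hj hij
    refine (Finset.sum_le_sum this).trans ?_
    rw [Finset.sum_add_distrib, Finset.sum_ite_eq]
    simp [hi, mul_add]
  have hE2 : ∫ ω, (Z ω - a * q) ^ 2 ∂P ≤ a * q + a ^ 2 * κ * q := by
    simp_rw [hZZ]
    have hD : Integrable (fun ω => (∑ i ∈ A, ∑ j ∈ A, (G i ∩ G j).indicator (fun _ => (1 : ℝ)) ω)
        - 2 * a * q * Z ω) P := hSi.sub (hZi.const_mul _)
    rw [integral_add hD (integrable_const _), integral_sub hSi (hZi.const_mul _), integral_const_mul, hEZ]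
    simp only [integral_const, probReal_univ, one_smul]
    nlinarith
  have hEm : MeasurableSet {ω | ∀ i ∈ A, ω ∉ G i} := by
    have : {ω | ∀ i ∈ A, ω ∉ G i} = ⋂ i ∈ A, (G i)ᶜ := by ext; simp
    rw [this]
    exact Finset.measurableSet_biInter _ fun i hi => (hG i hi).compl
  have hlow : P.real {ω | ∀ i ∈ A, ω ∉ G i} * (a * q) ^ 2 ≤ ∫ ω, (Z ω - a * q) ^ 2 ∂P := by
    rw [← smul_eq_mul, ← integral_indicator_const _ hEm]
    refine integral_mono ((integrable_const _).indicator hEm) hi2 fun ω => ?_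
    by_cases h : ω ∈ {ω | ∀ i ∈ A, ω ∉ G i}
    · have : Z ω = 0 := Finset.sum_eq_zero fun i hi => by simp [h i hi]
      simp [h, this]
    · rw [indicator_of_notMem h]; positivity
  have haq : 0 < a * q := by positivity
  rw [le_div_iff₀ haq]
  have := hlow.trans hE2
  have h3 : P.real {ω | ∀ i ∈ A, ω ∉ G i} * (a * q) * (a * q) ≤ (1 + a * κ) * (a * q) := by
    nlinarith
  exact le_of_mul_le_mul_right h3 haq

/-- The uniform variable attached to the unordered pair `{i, j}`. -/
def edgeVar (M : Model d P) (i j : ℕ) (ω : Ω) : ℝ := M.U (min i j) (max i j) ω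

/-- The uniform distribution on the cube. -/
abbrev cubeMeasure (d : ℕ) : Measure (EuclideanSpace ℝ (Fin d)) := volume.restrict (cube d)

/-- The uniform distribution on the unit interval. -/
abbrev unifMeasure : Measure ℝ := volume.restrict (Set.Icc (0 : ℝ) 1)

lemma isProbabilityMeasure_cubeMeasure [IsProbabilityMeasure P] (M : Model d P) :
    IsProbabilityMeasure (cubeMeasure d) := by
  have h := Measure.isProbabilityMeasure_map (μ := P) (M.X_meas 1).aemeasurable
  rwa [M.X_unif 1 le_rfl] at h

instance : IsProbabilityMeasure unifMeasure := ⟨by simp⟩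

lemma measurable_edgeVar (M : Model d P) (i j : ℕ) : Measurable (edgeVar M i j) :=
  M.U_meas _ _

lemma map_positions [IsProbabilityMeasure P] (M : Model d P) {b : ℕ} {i i' : ℕ}
    {J : Fin b → ℕ} (hi : 1 ≤ i) (hi' : 1 ≤ i') (hii : i ≠ i') (hJ : ∀ k, 1 ≤ J k)
    (hJi : ∀ k, J k ≠ i) (hJi' : ∀ k, J k ≠ i') (hJinj : Function.Injective J) :
    P.map (fun ω => (M.X i ω, M.X i' ω, fun k => M.X (J k) ω))
      = (cubeMeasure d).prod ((cubeMeasure d).prod (Measure.pi fun _ => cubeMeasure d)) := by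
  have := isProbabilityMeasure_cubeMeasure M
  set σ : Fin (b + 1 + 1) → ℕ := Fin.cons i (Fin.cons i' J : Fin (b + 1) → ℕ) with hσ
  have hσ1 : ∀ k, 1 ≤ σ k := by
    intro k
    refine Fin.cases ?_ (fun k => Fin.cases ?_ (fun k => ?_) k) k <;> simp [hσ, hi, hi', hJ]
  have hσinj : Function.Injective σ := by
    rw [hσ, Fin.cons_injective_iff, Fin.cons_injective_iff]
    refine ⟨?_, ?_, hJinj⟩
    · rintro ⟨k, hk⟩
      revert hk
      refine Fin.cases ?_ (fun k => ?_) k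
      · simpa using hii.symm
      · simpa using hJi k
    · rintro ⟨k, hk⟩
      exact hJi' k hk
  have hind := M.X_indep.precomp (g := fun k => (⟨σ k, hσ1 k⟩ : {i : ℕ // 1 ≤ i}))
    (fun k l hkl => hσinj (by simpa using hkl))
  have hmap := (iIndepFun_iff_map_fun_eq_pi_map (fun k => (M.X_meas _).aemeasurable)).1 hind
  have hmap' : P.map (fun ω k => M.X (σ k) ω) = Measure.pi fun _ => cubeMeasure d := by
    rw [hmap]
    congr 1
    funext k
    exact M.X_unif _ (hσ1 k)
  have e1 := measurePreserving_piFinSuccAbove (fun _ : Fin (b + 1 + 1) => cubeMeasure d) 0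
  have e2 := measurePreserving_piFinSuccAbove (fun _ : Fin (b + 1) => cubeMeasure d) 0
  have e3 := (((MeasurePreserving.id (cubeMeasure d)).prod e2).comp e1)
  have hm : Measurable (fun ω k => M.X (σ k) ω) := measurable_pi_lambda _ fun k => M.X_meas _
  rw [← e3.map_eq, ← hmap', Measure.map_map e3.measurable hm]
  congr 1

lemma map_edges [IsProbabilityMeasure P] (M : Model d P) {b : ℕ} {i i' : ℕ}
    {J : Fin b → ℕ} (hi : 1 ≤ i) (hi' : 1 ≤ i') (hii : i ≠ i') (hJ : ∀ k, 1 ≤ J k)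
    (hJi : ∀ k, J k ≠ i) (hJi' : ∀ k, J k ≠ i') (hJinj : Function.Injective J) :
    P.map (fun ω => ((fun k => edgeVar M i (J k) ω), (fun k => edgeVar M i' (J k) ω)))
      = (Measure.pi fun _ : Fin b => unifMeasure).prod (Measure.pi fun _ => unifMeasure) := by
  set σ : Fin b ⊕ Fin b → {p : ℕ × ℕ // 1 ≤ p.1 ∧ p.1 < p.2} := Sum.elim
    (fun k => ⟨(min i (J k), max i (J k)), by have := hJ k; have := hJi k; simp; omega⟩)
    (fun k => ⟨(min i' (J k), max i' (J k)), by have := hJ k; have := hJi' k; simp; omega⟩) with hσ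
  have hσinj : Function.Injective σ := by
    rintro (k | k) (l | l) h
    all_goals
      have h1 := congrArg (fun p => p.1.1) h
      have h2 := congrArg (fun p => p.1.2) h
      simp only [hσ, Sum.elim_inl, Sum.elim_inr] at h1 h2
      have a1 := hJi k
      have a2 := hJi' k
      have a3 := hJi l
      have a4 := hJi' l
    · congr 1; apply hJinj; omega
    · exfalso; omega
    · exfalso; omega
    · congr 1; apply hJinj; omega
  have hind := M.U_indep.precomp hσinj
  have hmap := (iIndepFun_iff_map_fun_eq_pi_map (fun k => (M.U_meas _ _).aemeasurable)).1 hind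
  have hmap' : P.map (fun ω k => M.U (σ k).1.1 (σ k).1.2 ω) = Measure.pi fun _ => unifMeasure := by
    rw [hmap]
    congr 1
    funext k
    exact M.U_unif _ _ (σ k).2.1 (σ k).2.2
  have e := measurePreserving_sumPiEquivProdPi (fun _ : Fin b ⊕ Fin b => unifMeasure)
  have hm : Measurable (fun ω k => M.U (σ k).1.1 (σ k).1.2 ω) :=
    measurable_pi_lambda _ fun k => M.U_meas _ _
  rw [← e.map_eq, ← hmap', Measure.map_map e.measurable hm]
  congr 1

lemma indepFun_positions_edges [IsProbabilityMeasure P] (M : Model d P) :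
    IndepFun (fun ω => fun i : ℕ => M.X i ω) (fun ω => fun p : ℕ × ℕ => M.U p.1 p.2 ω) P := by
  have h := M.families_indep.indep (i := 0) (j := 2) (by decide)
  exact h

/-- The joint law of two vertices and of everything determining their adjacency to the
vertices `J k`. -/
lemma map_star [IsProbabilityMeasure P] (M : Model d P) {b : ℕ} {i i' : ℕ}
    {J : Fin b → ℕ} (hi : 1 ≤ i) (hi' : 1 ≤ i') (hii : i ≠ i') (hJ : ∀ k, 1 ≤ J k)
    (hJi : ∀ k, J k ≠ i) (hJi' : ∀ k, J k ≠ i') (hJinj : Function.Injective J) :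
    P.map (fun ω => (M.X i ω, M.X i' ω,
        fun k => (M.X (J k) ω, edgeVar M i (J k) ω, edgeVar M i' (J k) ω)))
      = (cubeMeasure d).prod ((cubeMeasure d).prod
        (Measure.pi fun _ => (cubeMeasure d).prod (unifMeasure.prod unifMeasure))) := by
  have := isProbabilityMeasure_cubeMeasure M
  have hX := map_positions M hi hi' hii hJ hJi hJi' hJinj
  have hU := map_edges M hi hi' hii hJ hJi hJi' hJinj
  have hXm : Measurable (fun ω => (M.X i ω, M.X i' ω, fun k => M.X (J k) ω)) :=
    (M.X_meas _).prodMk ((M.X_meas _).prodMk (measurable_pi_lambda _ fun k => M.X_meas _))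
  have hUm : Measurable
      (fun ω => ((fun k => edgeVar M i (J k) ω), (fun k => edgeVar M i' (J k) ω))) :=
    (measurable_pi_lambda _ fun k => measurable_edgeVar _ _ _).prodMk
      (measurable_pi_lambda _ fun k => measurable_edgeVar _ _ _)
  have hind : IndepFun (fun ω => (M.X i ω, M.X i' ω, fun k => M.X (J k) ω))
      (fun ω => ((fun k => edgeVar M i (J k) ω), (fun k => edgeVar M i' (J k) ω))) P := by
    refine (indepFun_positions_edges M).comp
      (φ := fun x : ℕ → EuclideanSpace ℝ (Fin d) => (x i, x i', fun k => x (J k)))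
      (ψ := fun u : ℕ × ℕ → ℝ => ((fun k => u (min i (J k), max i (J k))),
        (fun k => u (min i' (J k), max i' (J k))))) ?_ ?_
    · fun_prop
    · fun_prop
  have hXU := (indepFun_iff_map_prod_eq_prod_map_map hXm.aemeasurable hUm.aemeasurable).1 hind
  rw [hX, hU] at hXU
  have e1 := (measurePreserving_arrowProdEquivProdArrow ℝ ℝ (Fin b)
    (fun _ => unifMeasure) (fun _ => unifMeasure)).symm
  have e2 := (measurePreserving_arrowProdEquivProdArrow (EuclideanSpace ℝ (Fin d)) (ℝ × ℝ) (Fin b)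
    (fun _ => cubeMeasure d) (fun _ => unifMeasure.prod unifMeasure)).symm
  have a1 := measurePreserving_prodAssoc (cubeMeasure d)
    ((cubeMeasure d).prod (Measure.pi fun _ : Fin b => cubeMeasure d))
    ((Measure.pi fun _ : Fin b => unifMeasure).prod (Measure.pi fun _ : Fin b => unifMeasure))
  have a2 := measurePreserving_prodAssoc (cubeMeasure d)
    (Measure.pi fun _ : Fin b => cubeMeasure d)
    ((Measure.pi fun _ : Fin b => unifMeasure).prod (Measure.pi fun _ : Fin b => unifMeasure))
  have c1 := e2.comp ((MeasurePreserving.id (Measure.pi fun _ : Fin b => cubeMeasure d)).prod e1)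
  have c2 := ((MeasurePreserving.id (cubeMeasure d)).prod c1).comp a2
  have c3 := ((MeasurePreserving.id (cubeMeasure d)).prod c2).comp a1
  rw [← c3.map_eq, ← hXU, Measure.map_map c3.measurable (hXm.prodMk hUm)]
  congr 1

/-- The event that at least `t` of the vertices `J k` are linked to `i`, the vertex `i` lying in
`I`, where `j` is linked to `i` when `(X j, U i j)` belongs to `S (X i)`. -/
def starEvent (M : Model d P) (I : Set (EuclideanSpace ℝ (Fin d)))
    (S : EuclideanSpace ℝ (Fin d) → Set (EuclideanSpace ℝ (Fin d) × ℝ)) {b : ℕ} (J : Fin b → ℕ)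
    (t i : ℕ) : Set Ω :=
  {ω | M.X i ω ∈ I ∧ t ≤ hits (S (M.X i ω)) fun k => (M.X (J k) ω, edgeVar M i (J k) ω)}

lemma measurable_hits_section {A Y : Type*} [MeasurableSpace A] [MeasurableSpace Y]
    {S : A → Set Y} (hS : MeasurableSet {z : A × Y | z.2 ∈ S z.1}) {B : Type*} [MeasurableSpace B]
    {b : ℕ} {f : B → A} {w : B → Fin b → Y} (hf : Measurable f) (hw : Measurable w) :
    Measurable (fun z => hits (S (f z)) (w z)) := by
  unfold hits
  refine Finset.measurable_fun_sum _ fun j _ => ?_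
  have h : (fun z => (S (f z)).indicator (fun _ => (1 : ℕ)) (w z j)) =
      ({z : A × Y | z.2 ∈ S z.1}.indicator (fun _ => (1 : ℕ))) ∘ fun z => (f z, w z j) := by
    funext z
    by_cases h : w z j ∈ S (f z) <;> simp [h]
  rw [h]
  exact (measurable_const.indicator hS).comp (hf.prodMk ((measurable_pi_apply j).comp hw))

lemma measurableSet_starEvent (M : Model d P) {I : Set (EuclideanSpace ℝ (Fin d))}
    (hI : MeasurableSet I)
    {S : EuclideanSpace ℝ (Fin d) → Set (EuclideanSpace ℝ (Fin d) × ℝ)}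
    (hS : MeasurableSet {z : EuclideanSpace ℝ (Fin d) × (EuclideanSpace ℝ (Fin d) × ℝ) |
      z.2 ∈ S z.1}) {b : ℕ} (J : Fin b → ℕ) (t i : ℕ) :
    MeasurableSet (starEvent M I S J t i) :=
  ((M.X_meas i) hI).inter (measurableSet_le measurable_const
    (measurable_hits_section hS (M.X_meas i) (measurable_pi_lambda _ fun _ =>
      (M.X_meas _).prodMk (measurable_edgeVar _ _ _))))

section Law

variable (ν : Measure (EuclideanSpace ℝ (Fin d))) [IsProbabilityMeasure ν]

lemma measurePreserving_fstEdge :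
    MeasurePreserving (fun z : EuclideanSpace ℝ (Fin d) × ℝ × ℝ => (z.1, z.2.1))
      (ν.prod (unifMeasure.prod unifMeasure)) (ν.prod unifMeasure) :=
  (MeasurePreserving.id ν).prod measurePreserving_fst

lemma measurePreserving_sndEdge :
    MeasurePreserving (fun z : EuclideanSpace ℝ (Fin d) × ℝ × ℝ => (z.1, z.2.2))
      (ν.prod (unifMeasure.prod unifMeasure)) (ν.prod unifMeasure) :=
  (MeasurePreserving.id ν).prod measurePreserving_snd

end Law

lemma hits_preimage {Y Y' : Type*} (f : Y → Y') (S : Set Y') {b : ℕ} (w : Fin b → Y) :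
    hits (f ⁻¹' S) w = hits S fun k => f (w k) := rfl

/-- Conditioning on the position of the vertex `i`. -/
lemma measure_starEvent [IsProbabilityMeasure P] (M : Model d P)
    {I : Set (EuclideanSpace ℝ (Fin d))} (hI : MeasurableSet I)
    {S : EuclideanSpace ℝ (Fin d) → Set (EuclideanSpace ℝ (Fin d) × ℝ)}
    (hS : MeasurableSet {z : EuclideanSpace ℝ (Fin d) × (EuclideanSpace ℝ (Fin d) × ℝ) |
      z.2 ∈ S z.1}) {b : ℕ} {J : Fin b → ℕ} {i : ℕ} (hi : 1 ≤ i) (hJ : ∀ k, 1 ≤ J k)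
    (hJi : ∀ k, J k ≠ i) (hJinj : Function.Injective J) (t : ℕ) :
    P (starEvent M I S J t i) = ∫⁻ x, I.indicator (fun x => ENNReal.ofReal
      (binTail (((cubeMeasure d).prod unifMeasure).real (S x)) b t)) x ∂(cubeMeasure d) := by
  have := isProbabilityMeasure_cubeMeasure M
  obtain ⟨i', hi'1, hi'i, hi'J⟩ : ∃ i', 1 ≤ i' ∧ i ≠ i' ∧ ∀ k, J k ≠ i' := by
    refine ⟨i + ∑ k, J k + 1, by omega, by omega, fun k => ?_⟩
    have := Finset.single_le_sum (f := J) (fun _ _ => Nat.zero_le _) (Finset.mem_univ k)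
    omega
  have hlaw := map_star M hi hi'1 hi'i hJ hJi hi'J hJinj
  have hm : Measurable (fun ω => (M.X i ω, M.X i' ω,
        fun k => (M.X (J k) ω, edgeVar M i (J k) ω, edgeVar M i' (J k) ω))) :=
    (M.X_meas _).prodMk ((M.X_meas _).prodMk (measurable_pi_lambda _ fun k =>
      (M.X_meas _).prodMk ((measurable_edgeVar _ _ _).prodMk (measurable_edgeVar _ _ _))))
  set Q : Set (EuclideanSpace ℝ (Fin d) × EuclideanSpace ℝ (Fin d) ×
      (Fin b → EuclideanSpace ℝ (Fin d) × ℝ × ℝ)) :=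
    {z | z.1 ∈ I ∧ t ≤ hits (S z.1) fun k => ((z.2.2 k).1, (z.2.2 k).2.1)} with hQ
  have hQm : MeasurableSet Q := (measurable_fst hI).inter (measurableSet_le measurable_const
    (measurable_hits_section hS measurable_fst (by fun_prop)))
  have h1 : P (starEvent M I S J t i) = _ := (Measure.map_apply hm hQm).symm
  rw [h1, hlaw, Measure.prod_apply hQm]
  refine lintegral_congr fun x => ?_
  rw [Measure.prod_apply (measurable_prodMk_left hQm)]
  have hSx : MeasurableSet (S x) := measurable_prodMk_left hS
  have mp := measurePreserving_fstEdge (cubeMeasure d)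
  by_cases hx : x ∈ I
  · rw [indicator_of_mem hx]
    have : ∀ x' : EuclideanSpace ℝ (Fin d), (Prod.mk x' ⁻¹' (Prod.mk x ⁻¹' Q))
        = {w | t ≤ hits ((fun z : EuclideanSpace ℝ (Fin d) × ℝ × ℝ => (z.1, z.2.1)) ⁻¹' S x) w} := by
      intro x'
      ext w
      simp [hQ, hx, hits_preimage]
    simp_rw [this]
    rw [lintegral_const, measure_univ, mul_one, ← ofReal_measureReal (measure_ne_top _ _),
      pi_hits_ge _ (mp.measurable hSx), mp.measureReal_preimage hSx.nullMeasurableSet]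
  · have : ∀ x' : EuclideanSpace ℝ (Fin d), (Prod.mk x' ⁻¹' (Prod.mk x ⁻¹' Q)) = ∅ := by
      intro x'
      ext w
      simp [hQ, hx]
    simp [this, hx]

/-- Two vertices whose potential neighbourhoods are disjoint unless the vertices are close. -/
lemma measure_starEvent_inter_le [IsProbabilityMeasure P] (M : Model d P)
    {I : Set (EuclideanSpace ℝ (Fin d))} (hI : MeasurableSet I)
    {S : EuclideanSpace ℝ (Fin d) → Set (EuclideanSpace ℝ (Fin d) × ℝ)}
    (hS : MeasurableSet {z : EuclideanSpace ℝ (Fin d) × (EuclideanSpace ℝ (Fin d) × ℝ) |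
      z.2 ∈ S z.1}) {b : ℕ} {J : Fin b → ℕ} {i i' : ℕ} (hi : 1 ≤ i) (hi' : 1 ≤ i') (hii : i ≠ i')
    (hJ : ∀ k, 1 ≤ J k) (hJi : ∀ k, J k ≠ i) (hJi' : ∀ k, J k ≠ i')
    (hJinj : Function.Injective J) (t : ℕ) {p ρ κ : ℝ}
    (hp : ∀ x ∈ I, ((cubeMeasure d).prod unifMeasure).real (S x) = p)
    (hρ : ∀ x ∈ I, ∀ z ∈ S x, ‖x - z.1‖ ≤ ρ) (hκ0 : 0 ≤ κ)
    (hκ : ∀ x, (cubeMeasure d).real (Metric.closedBall x (2 * ρ)) ≤ κ)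
    {q : ℝ} (hq : q = (cubeMeasure d).real I * binTail p b t) (hp0 : 0 ≤ p) (hp1 : p ≤ 1) :
    P.real (starEvent M I S J t i ∩ starEvent M I S J t i') ≤ q ^ 2 + κ * q := by
  have := isProbabilityMeasure_cubeMeasure M
  have hlaw := map_star M hi hi' hii hJ hJi hJi' hJinj
  have hm : Measurable (fun ω => (M.X i ω, M.X i' ω,
        fun k => (M.X (J k) ω, edgeVar M i (J k) ω, edgeVar M i' (J k) ω))) :=
    (M.X_meas _).prodMk ((M.X_meas _).prodMk (measurable_pi_lambda _ fun k =>
      (M.X_meas _).prodMk ((measurable_edgeVar _ _ _).prodMk (measurable_edgeVar _ _ _))))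
  set Q : Set (EuclideanSpace ℝ (Fin d) × EuclideanSpace ℝ (Fin d) ×
      (Fin b → EuclideanSpace ℝ (Fin d) × ℝ × ℝ)) :=
    {z | z.1 ∈ I ∧ t ≤ hits (S z.1) fun k => ((z.2.2 k).1, (z.2.2 k).2.1)} ∩
    {z | z.2.1 ∈ I ∧ t ≤ hits (S z.2.1) fun k => ((z.2.2 k).1, (z.2.2 k).2.2)} with hQ
  have hQm : MeasurableSet Q := by
    refine ((measurable_fst hI).inter (measurableSet_le measurable_const
      (measurable_hits_section hS measurable_fst (by fun_prop)))).inter ?_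
    exact ((measurable_fst.comp measurable_snd) hI).inter (measurableSet_le measurable_const
      (measurable_hits_section hS (measurable_fst.comp measurable_snd) (by fun_prop)))
  have h1 : P (starEvent M I S J t i ∩ starEvent M I S J t i') = _ :=
    (Measure.map_apply hm hQm).symm
  set T := binTail p b t with hT
  have hT0 : 0 ≤ T := binTail_nonneg hp0 hp1 b t
  set v := (cubeMeasure d).real I with hv
  have hv0 : 0 ≤ v := measureReal_nonneg
  have mp1 := measurePreserving_fstEdge (cubeMeasure d)
  have mp2 := measurePreserving_sndEdge (cubeMeasure d)
  set π := Measure.pi fun _ : Fin b => (cubeMeasure d).prod (unifMeasure.prod unifMeasure) with hπ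
  have hpt : ∀ x x', π (Prod.mk x' ⁻¹' (Prod.mk x ⁻¹' Q)) ≤
      I.indicator (fun _ => I.indicator (fun _ => ENNReal.ofReal (T * T)) x'
        + (Metric.closedBall x (2 * ρ)).indicator (fun _ => ENNReal.ofReal T) x') x := by
    intro x x'
    by_cases hx : x ∈ I
    swap
    · have : (Prod.mk x' ⁻¹' (Prod.mk x ⁻¹' Q)) = ∅ := by ext w; simp [hQ, hx]
      simp [this]
    by_cases hx' : x' ∈ I
    swap
    · have : (Prod.mk x' ⁻¹' (Prod.mk x ⁻¹' Q)) = ∅ := by ext w; simp [hQ, hx']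
      simp [this]
    have hSx : MeasurableSet (S x) := measurable_prodMk_left hS
    have hSx' : MeasurableSet (S x') := measurable_prodMk_left hS
    have hset : (Prod.mk x' ⁻¹' (Prod.mk x ⁻¹' Q))
        = {w | t ≤ hits ((fun z : EuclideanSpace ℝ (Fin d) × ℝ × ℝ => (z.1, z.2.1)) ⁻¹' S x) w ∧
          t ≤ hits ((fun z : EuclideanSpace ℝ (Fin d) × ℝ × ℝ => (z.1, z.2.2)) ⁻¹' S x') w} := by
      ext w
      simp [hQ, hx, hx', hits_preimage]
    rw [hset, indicator_of_mem hx, indicator_of_mem hx',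
      ← ofReal_measureReal (measure_ne_top _ _)]
    by_cases hclose : x' ∈ Metric.closedBall x (2 * ρ)
    · rw [indicator_of_mem hclose]
      refine le_add_left (ENNReal.ofReal_le_ofReal ?_)
      rw [hT, ← hp x hx, ← mp1.measureReal_preimage hSx.nullMeasurableSet,
        ← pi_hits_ge _ (mp1.measurable hSx)]
      exact measureReal_mono fun w hw => hw.1
    · refine le_add_right (ENNReal.ofReal_le_ofReal ?_)
      refine (pi_hits_ge_inter_le _ (mp1.measurable hSx) (mp2.measurable hSx') ?_ b t t).trans_eq ?_
      · rw [Set.disjoint_left]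
        intro z hz hz'
        have a1 := hρ x hx _ hz
        have a2 := hρ x' hx' _ hz'
        apply hclose
        rw [Metric.mem_closedBall, dist_eq_norm]
        calc ‖x' - x‖ = ‖(x' - z.1) - (x - z.1)‖ := by congr 1; abel
          _ ≤ _ := norm_sub_le _ _
          _ ≤ 2 * ρ := by simp only at a1 a2; linarith
      · rw [mp1.measureReal_preimage hSx.nullMeasurableSet,
          mp2.measureReal_preimage hSx'.nullMeasurableSet, hp x hx, hp x' hx']
  have hbound : P (starEvent M I S J t i ∩ starEvent M I S J t i')
      ≤ ENNReal.ofReal (q ^ 2 + κ * q) := by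
    rw [h1, hlaw, Measure.prod_apply hQm]
    calc _ ≤ ∫⁻ x, I.indicator (fun _ => ENNReal.ofReal (T * T * v + T * κ)) x ∂(cubeMeasure d) := by
          refine lintegral_mono fun x => ?_
          rw [Measure.prod_apply (measurable_prodMk_left hQm)]
          refine (lintegral_mono (hpt x)).trans ?_
          by_cases hx : x ∈ I
          · simp only [indicator_of_mem hx]
            rw [lintegral_add_left (measurable_const.indicator hI), lintegral_indicator_const hI,
              lintegral_indicator_const Metric.isClosed_closedBall.measurableSet,
              ENNReal.ofReal_add (by positivity) (by positivity),
              ENNReal.ofReal_mul (by positivity : 0 ≤ T * T), ENNReal.ofReal_mul (q := κ) hT0]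
            rw [hv, ofReal_measureReal (measure_ne_top _ _)]
            gcongr
            rw [← ofReal_measureReal (measure_ne_top _ _)]
            exact ENNReal.ofReal_le_ofReal (hκ x)
          · simp [hx]
      _ = ENNReal.ofReal (q ^ 2 + κ * q) := by
          rw [lintegral_indicator_const hI, ← ofReal_measureReal (measure_ne_top _ _),
            ← ENNReal.ofReal_mul (by positivity)]
          congr 1
          rw [hq]; ring
  have hq0 : 0 ≤ q := by rw [hq]; positivity
  exact ENNReal.toReal_le_of_le_ofReal (by positivity) hbound

/-- Links along which the connection function is certainly satisfied and of length at most
`R * r`. -/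
def nearSet (M : Model d P) (R r : ℝ) (x : EuclideanSpace ℝ (Fin d)) :
    Set (EuclideanSpace ℝ (Fin d) × ℝ) :=
  {z | ‖x - z.1‖ ≤ R * r ∧ z.2 ≤ M.g (‖x - z.1‖ / r)}

/-- Links of the random connection model on the torus. -/
def torusSet (M : Model d P) (r : ℝ) (x : EuclideanSpace ℝ (Fin d)) :
    Set (EuclideanSpace ℝ (Fin d) × ℝ) :=
  {z | z.2 ≤ M.g (torusDist x z.1 / r)}

lemma torusDist_nonneg (x y : EuclideanSpace ℝ (Fin d)) : 0 ≤ torusDist x y :=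
  Real.iInf_nonneg fun _ => norm_nonneg _

lemma torusDist_le_norm (x y : EuclideanSpace ℝ (Fin d)) : torusDist x y ≤ ‖x - y‖ := by
  refine (ciInf_le ⟨0, ?_⟩ (0 : Fin d → ℤ)).trans_eq ?_
  · rintro _ ⟨z, rfl⟩
    exact norm_nonneg _
  · congr 1
    ext i
    simp

lemma measurable_torusDist {B : Type*} [MeasurableSpace B]
    {f f' : B → EuclideanSpace ℝ (Fin d)} (hf : Measurable f) (hf' : Measurable f') :
    Measurable (fun z => torusDist (f z) (f' z)) := by
  unfold torusDist
  exact Measurable.iInf fun z => by fun_prop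

lemma measurable_comp_g (M : Model d P) {B : Type*} [MeasurableSpace B] {f : B → ℝ}
    (hf : Measurable f) (h0 : ∀ z, 0 ≤ f z) : Measurable (fun z => M.g (f z)) := by
  have hanti : Antitone (fun s => M.g (max s 0)) := fun s s' h =>
    M.g_antitone (mem_Ici.2 (le_max_right s 0)) (mem_Ici.2 (le_max_right s' 0)) (max_le_max_right 0 h)
  have : (fun z => M.g (f z)) = (fun s => M.g (max s 0)) ∘ f := by
    funext z; simp [max_eq_left (h0 z)]
  rw [this]
  exact hanti.measurable.comp hf

lemma measurableSet_nearSet (M : Model d P) (R : ℝ) {r : ℝ} (hr : 0 < r) :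
    MeasurableSet {z : EuclideanSpace ℝ (Fin d) × (EuclideanSpace ℝ (Fin d) × ℝ) |
      z.2 ∈ nearSet M R r z.1} := by
  have h1 : Measurable fun z : EuclideanSpace ℝ (Fin d) × (EuclideanSpace ℝ (Fin d) × ℝ) =>
      ‖z.1 - z.2.1‖ := by fun_prop
  exact (measurableSet_le h1 measurable_const).inter
    (measurableSet_le (measurable_snd.comp measurable_snd)
      (measurable_comp_g M (h1.div_const r) fun z => by positivity))

lemma measurableSet_torusSet (M : Model d P) {r : ℝ} (hr : 0 < r) :
    MeasurableSet {z : EuclideanSpace ℝ (Fin d) × (EuclideanSpace ℝ (Fin d) × ℝ) |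
      z.2 ∈ torusSet M r z.1} := by
  have h1 : Measurable fun z : EuclideanSpace ℝ (Fin d) × (EuclideanSpace ℝ (Fin d) × ℝ) =>
      torusDist z.1 z.2.1 :=
    measurable_torusDist measurable_fst (measurable_fst.comp measurable_snd)
  exact measurableSet_le (measurable_snd.comp measurable_snd)
    (measurable_comp_g M (h1.div_const r) fun z => div_nonneg (torusDist_nonneg _ _) hr.le)

lemma unifMeasure_real_le {v : ℝ} (h0 : 0 ≤ v) (h1 : v ≤ 1) :
    unifMeasure.real {u | u ≤ v} = v := by
  have : {u : ℝ | u ≤ v} = Iic v := rfl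
  have h2 : Iic v ∩ Icc 0 1 = Icc 0 v := by
    ext u
    simp only [mem_inter_iff, mem_Iic, mem_Icc]
    exact ⟨fun h => ⟨h.2.1, h.1⟩, fun h => ⟨h.2, h.1, h.2.trans h1⟩⟩
  rw [this, measureReal_restrict_apply measurableSet_Iic, h2]
  simp [h0]

lemma prod_real_eq_integral (ν : Measure (EuclideanSpace ℝ (Fin d))) [IsFiniteMeasure ν]
    {A : Set (EuclideanSpace ℝ (Fin d) × ℝ)} (hA : MeasurableSet A) :
    (ν.prod unifMeasure).real A = ∫ y, unifMeasure.real {u | (y, u) ∈ A} ∂ν := by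
  rw [measureReal_def, Measure.prod_apply hA, ← integral_toReal]
  · rfl
  · exact (measurable_measure_prodMk_left hA).aemeasurable
  · exact Eventually.of_forall fun y => measure_lt_top _ _

/-- The mass of the connection function on the ball of radius `R`. -/
def truncMass (M : Model d P) (R : ℝ) : ℝ :=
  ∫ x in Metric.closedBall (0 : EuclideanSpace ℝ (Fin d)) R, M.g ‖x‖

lemma tendsto_truncMass (M : Model d P) : Tendsto (truncMass M) atTop (nhds M.α) := by
  rw [M.α_def]
  exact (aecover_closedBall tendsto_id).integral_tendsto_of_countably_generated M.g_integrable

lemma truncMass_le (M : Model d P) (R : ℝ) : truncMass M R ≤ M.α := by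
  rw [M.α_def]
  exact setIntegral_le_integral M.g_integrable
    (Eventually.of_forall fun x => (M.g_mem _ (norm_nonneg x)).1)

lemma truncMass_nonneg (M : Model d P) (R : ℝ) : 0 ≤ truncMass M R :=
  integral_nonneg fun x => (M.g_mem _ (norm_nonneg x)).1

lemma integral_comp_inv_smul_sub {f : EuclideanSpace ℝ (Fin d) → ℝ} {r : ℝ} (hr : 0 < r)
    (x : EuclideanSpace ℝ (Fin d)) : ∫ y, f (r⁻¹ • (x - y)) = r ^ d * ∫ y, f y := by
  rw [integral_sub_left_eq_self (fun y => f (r⁻¹ • y)) volume x, Measure.integral_comp_inv_smul]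
  simp [abs_of_pos hr]

lemma closedBall_subset_cube {x : EuclideanSpace ℝ (Fin d)} {ρ : ℝ} (hx : ‖x‖ + ρ < 1 / 2) :
    Metric.closedBall x ρ ⊆ cube d := by
  intro y hy i
  rw [Metric.mem_closedBall, dist_eq_norm] at hy
  have h1 : ‖y‖ ≤ ‖x‖ + ρ := by
    calc ‖y‖ = ‖x + (y - x)‖ := by congr 1; abel
      _ ≤ ‖x‖ + ‖y - x‖ := norm_add_le _ _
      _ ≤ _ := by linarith
  have h2 : |y i| ≤ ‖y‖ := by simpa using PiLp.norm_apply_le y i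
  have h3 := abs_le.1 (h2.trans h1)
  constructor <;> linarith [h3.1, h3.2]

lemma prod_real_nearSet [IsProbabilityMeasure P] (M : Model d P) {R r : ℝ} (hr : 0 < r)
    {x : EuclideanSpace ℝ (Fin d)} (hx : ‖x‖ + R * r < 1 / 2) :
    ((cubeMeasure d).prod unifMeasure).real (nearSet M R r x) = r ^ d * truncMass M R := by
  have := isProbabilityMeasure_cubeMeasure M
  have hmeas : MeasurableSet (nearSet M R r x) :=
    measurable_prodMk_left (measurableSet_nearSet M R hr)
  rw [prod_real_eq_integral _ hmeas]
  set f : EuclideanSpace ℝ (Fin d) → ℝ :=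
    (Metric.closedBall 0 R).indicator fun z => M.g ‖z‖ with hf
  have h1 : ∀ y, unifMeasure.real {u | (y, u) ∈ nearSet M R r x} = f (r⁻¹ • (x - y)) := by
    intro y
    have hn : ‖r⁻¹ • (x - y)‖ = ‖x - y‖ / r := by
      rw [norm_smul, norm_inv, Real.norm_of_nonneg hr.le]; field_simp
    have hmem : r⁻¹ • (x - y) ∈ Metric.closedBall (0 : EuclideanSpace ℝ (Fin d)) R ↔
        ‖x - y‖ ≤ R * r := by
      rw [mem_closedBall_zero_iff, hn, div_le_iff₀ hr]
    by_cases h : ‖x - y‖ ≤ R * r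
    · have hg := M.g_mem (‖x - y‖ / r) (by positivity)
      rw [hf, indicator_of_mem (hmem.2 h), hn, ← unifMeasure_real_le hg.1 hg.2]
      simp [nearSet, h]
    · rw [hf, indicator_of_notMem (fun hh => h (hmem.1 hh))]
      simp [nearSet, h]
  simp_rw [h1]
  rw [setIntegral_eq_integral_of_forall_compl_eq_zero, integral_comp_inv_smul_sub hr, hf,
    integral_indicator Metric.isClosed_closedBall.measurableSet]
  · rfl
  · intro y hy
    rw [← h1]
    have : ¬ ‖x - y‖ ≤ R * r := fun h => hy (closedBall_subset_cube hx (by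
      rwa [Metric.mem_closedBall, dist_comm, dist_eq_norm]))
    simp [nearSet, this]

/-- On the unit cube the toroidal distance is attained at a lattice vector with coordinates in
`{-1, 0, 1}`. -/
lemma exists_norm_le_torusDist {x y : EuclideanSpace ℝ (Fin d)} (hx : x ∈ cube d)
    (hy : y ∈ cube d) : ∃ z ∈ Fintype.piFinset (fun _ : Fin d => ({-1, 0, 1} : Finset ℤ)),
      ‖x - y - (WithLp.equiv 2 (Fin d → ℝ)).symm (fun i => (z i : ℝ))‖ ≤ torusDist x y := by
  refine ⟨fun i => round (x i - y i), ?_, le_ciInf fun z => ?_⟩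
  · rw [Fintype.mem_piFinset]
    intro i
    have h1 := abs_le.1 (abs_sub_round (x i - y i))
    obtain ⟨a1, a2⟩ := hx i
    obtain ⟨b1, b2⟩ := hy i
    have l1 : (-2 : ℝ) < (round (x i - y i) : ℝ) := by linarith [h1.2]
    have l2 : (round (x i - y i) : ℝ) < 2 := by linarith [h1.1]
    have l1' : -2 < round (x i - y i) := by exact_mod_cast l1
    have l2' : round (x i - y i) < 2 := by exact_mod_cast l2
    simp only [Finset.mem_insert, Finset.mem_singleton]
    omega
  · rw [EuclideanSpace.norm_eq, EuclideanSpace.norm_eq]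
    refine Real.sqrt_le_sqrt (Finset.sum_le_sum fun i _ => ?_)
    refine pow_le_pow_left₀ (norm_nonneg _) ?_ 2
    simpa using round_le (x i - y i) (z i)

lemma measurableSet_cube : MeasurableSet (cube d) := by
  have : cube d = ⋂ i, (fun x : EuclideanSpace ℝ (Fin d) => x i) ⁻¹'
    Set.Ioc (-(1/2) : ℝ) (1/2) := by ext; simp [cube]
  rw [this]
  exact MeasurableSet.iInter fun i => (by fun_prop :
    Measurable fun x : EuclideanSpace ℝ (Fin d) => x i) measurableSet_Ioc

lemma prod_real_torusSet_le [IsProbabilityMeasure P] (M : Model d P) {r : ℝ} (hr : 0 < r)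
    {x : EuclideanSpace ℝ (Fin d)} (hx : x ∈ cube d) :
    ((cubeMeasure d).prod unifMeasure).real (torusSet M r x) ≤ 3 ^ d * (r ^ d * M.α) := by
  have := isProbabilityMeasure_cubeMeasure M
  have hmeas : MeasurableSet (torusSet M r x) :=
    measurable_prodMk_left (measurableSet_torusSet M hr)
  rw [prod_real_eq_integral _ hmeas]
  set f : EuclideanSpace ℝ (Fin d) → ℝ := fun z => M.g ‖z‖ with hf
  have hfnn : ∀ z, 0 ≤ f z := fun z => (M.g_mem _ (norm_nonneg z)).1
  set s := Fintype.piFinset (fun _ : Fin d => ({-1, 0, 1} : Finset ℤ)) with hs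
  set τ : (Fin d → ℤ) → EuclideanSpace ℝ (Fin d) := fun z =>
    (WithLp.equiv 2 (Fin d → ℝ)).symm (fun i => (z i : ℝ)) with hτ
  have h1 : ∀ y, unifMeasure.real {u | (y, u) ∈ torusSet M r x} = M.g (torusDist x y / r) := by
    intro y
    have hg := M.g_mem (torusDist x y / r) (div_nonneg (torusDist_nonneg _ _) hr.le)
    exact unifMeasure_real_le hg.1 hg.2
  have hint : ∀ z ∈ s, Integrable (fun y => f (r⁻¹ • (x - τ z - y))) := fun z _ =>
    (M.g_integrable.comp_smul (inv_ne_zero hr.ne')).comp_sub_left (x - τ z)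
  have hI : Integrable (fun y => ∑ z ∈ s, f (r⁻¹ • (x - τ z - y))) := integrable_finsetSum _ hint
  calc _ ≤ ∫ y in cube d, ∑ z ∈ s, f (r⁻¹ • (x - τ z - y)) := by
        refine setIntegral_mono_on₀ ?_ hI.integrableOn measurableSet_cube.nullMeasurableSet fun y hy => ?_
        · refine Integrable.of_bound (C := 1) ?_ (Eventually.of_forall fun y => ?_)
          · simp_rw [h1]
            exact (measurable_comp_g M ((measurable_torusDist measurable_const
              measurable_id).div_const r)
              fun z => div_nonneg (torusDist_nonneg _ _) hr.le).aestronglyMeasurable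
          · rw [Real.norm_of_nonneg measureReal_nonneg]
            exact measureReal_le_one
        · rw [h1]
          obtain ⟨z, hz, hle⟩ := exists_norm_le_torusDist hx hy
          have hle2 : M.g (torusDist x y / r) ≤ f (r⁻¹ • (x - τ z - y)) := by
            have hn : ‖r⁻¹ • (x - τ z - y)‖ = ‖x - y - τ z‖ / r := by
              rw [norm_smul, norm_inv, Real.norm_of_nonneg hr.le, sub_right_comm]; field_simp
            rw [hf]
            simp only
            rw [hn]
            exact M.g_antitone (by simp; positivity)
              (div_nonneg (torusDist_nonneg _ _) hr.le) (by gcongr)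
          exact hle2.trans (Finset.single_le_sum
            (f := fun z => f (r⁻¹ • (x - τ z - y))) (fun _ _ => hfnn _) hz)
    _ ≤ ∫ y, ∑ z ∈ s, f (r⁻¹ • (x - τ z - y)) :=
        setIntegral_le_integral hI (Eventually.of_forall fun y => Finset.sum_nonneg fun _ _ => hfnn _)
    _ = 3 ^ d * (r ^ d * M.α) := by
        rw [integral_finsetSum _ hint]
        simp_rw [integral_comp_inv_smul_sub (f := f) hr]
        rw [Finset.sum_const, hs, Fintype.card_piFinset, M.α_def]
        simp [hf]

lemma cubeMeasure_real_closedBall_le (x : EuclideanSpace ℝ (Fin d)) {ρ : ℝ} (hρ : 0 ≤ ρ) :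
    (cubeMeasure d).real (Metric.closedBall x ρ)
      ≤ ρ ^ d * (volume : Measure (EuclideanSpace ℝ (Fin d))).real (Metric.ball 0 1) := by
  rw [measureReal_restrict_apply Metric.isClosed_closedBall.measurableSet]
  refine (measureReal_mono inter_subset_left measure_closedBall_lt_top.ne).trans_eq ?_
  rw [Measure.addHaar_real_closedBall _ _ hρ]
  simp

lemma cubeMeasure_real_inner_pos :
    0 < (cubeMeasure d).real (Metric.closedBall 0 (1 / 4)) := by
  rw [measureReal_restrict_apply Metric.isClosed_closedBall.measurableSet,
    inter_eq_left.2 (closedBall_subset_cube (by norm_num))]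
  exact ENNReal.toReal_pos (Metric.measure_closedBall_pos _ _ (by norm_num)).ne'
    measure_closedBall_lt_top.ne

/-- Chernoff bound for the Poisson counts. -/
lemma measureReal_count_le (M : Model d P) (n : ℕ) (h c : ℝ) :
    P.real {ω | c ≤ h * M.N n ω} ≤ Real.exp (n * (Real.exp h - 1) - c) := by
  have hE : ∫⁻ ω, ENNReal.ofReal (Real.exp (h * M.N n ω - c)) ∂P
      = ENNReal.ofReal (Real.exp (n * (Real.exp h - 1) - c)) := by
    have h1 : ∫⁻ ω, ENNReal.ofReal (Real.exp (h * M.N n ω - c)) ∂P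
        = ∫⁻ k : ℕ, ENNReal.ofReal (Real.exp (h * k - c)) ∂(P.map (M.N n)) :=
      (lintegral_map (f := fun k : ℕ => ENNReal.ofReal (Real.exp (h * k - c)))
        (measurable_of_countable _) (M.N_meas n)).symm
    rw [h1, lintegral_countable']
    have h2 : ∀ k : ℕ, ENNReal.ofReal (Real.exp (h * k - c)) * (P.map (M.N n)) {k}
        = ENNReal.ofReal (Real.exp (-(n : ℝ) - c) * ((n * Real.exp h) ^ k / k.factorial)) := by
      intro k
      rw [Measure.map_apply (M.N_meas n) (measurableSet_singleton k)]
      have h3 : P (M.N n ⁻¹' {k}) = _ := M.N_poisson n k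
      rw [h3, ← ENNReal.ofReal_mul (Real.exp_nonneg _)]
      congr 1
      rw [mul_pow, ← Real.exp_nat_mul, sub_eq_add_neg, Real.exp_add, sub_eq_add_neg (-(n : ℝ)),
        Real.exp_add, mul_comm h]
      ring
    simp_rw [h2]
    have hs := (NormedSpace.expSeries_div_hasSum_exp ((n : ℝ) * Real.exp h)).mul_left
      (Real.exp (-(n : ℝ) - c))
    rw [← ENNReal.ofReal_tsum_of_nonneg (fun k => by positivity) hs.summable, hs.tsum_eq,
      ← Real.exp_eq_exp_ℝ, ← Real.exp_add]
    congr 2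
    ring
  refine ENNReal.toReal_le_of_le_ofReal (Real.exp_nonneg _) ?_
  rw [← hE]
  have hm : Measurable fun ω => ENNReal.ofReal (Real.exp (h * M.N n ω - c)) := by
    have := M.N_meas n
    have h' : Measurable fun ω => (M.N n ω : ℝ) := measurable_from_nat.comp this
    fun_prop
  have hmk := mul_meas_ge_le_lintegral₀ (μ := P) hm.aemeasurable 1
  rw [one_mul] at hmk
  refine (measure_mono fun ω hω => ?_).trans hmk
  have : c ≤ h * M.N n ω := hω
  change 1 ≤ ENNReal.ofReal _
  rw [ENNReal.one_le_ofReal]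
  exact Real.one_le_exp (by linarith)

lemma measureReal_count_lt_le [IsProbabilityMeasure P] (M : Model d P) (n : ℕ) {ε : ℝ}
    (h0 : 0 < ε) (h1 : ε < 1) :
    P.real {ω | (M.N n ω : ℝ) < (1 - ε) * n} ≤ Real.exp (-(ε ^ 3 / 2 * n)) := by
  have h := measureReal_count_le M n (-ε) (-ε * ((1 - ε) * n))
  refine (measureReal_mono fun ω hω => ?_).trans (h.trans (Real.exp_le_exp.2 ?_))
  · have hω' : (M.N n ω : ℝ) < (1 - ε) * n := hω
    change -ε * ((1 - ε) * n) ≤ -ε * M.N n ω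
    nlinarith
  · have e1 : Real.exp (-ε) ≤ 1 / (1 + ε) := by
      rw [Real.exp_neg, ← one_div]
      exact one_div_le_one_div_of_le (by linarith) (by linarith [Real.add_one_le_exp ε])
    have e2 : 1 / (1 + ε) - 1 + ε * (1 - ε) ≤ -(ε ^ 3 / 2) := by
      have : 1 / (1 + ε) - 1 + ε * (1 - ε) = -(ε ^ 3 / (1 + ε)) := by field_simp; ring
      rw [this]
      have : ε ^ 3 / 2 ≤ ε ^ 3 / (1 + ε) :=
        div_le_div_of_nonneg_left (by positivity) (by linarith) (by linarith)
      linarith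
    have hn : (0 : ℝ) ≤ n := Nat.cast_nonneg n
    nlinarith

lemma measureReal_count_gt_le [IsProbabilityMeasure P] (M : Model d P) (n : ℕ) :
    P.real {ω | 2 * n ≤ M.N n ω} ≤ Real.exp (-((1 / 4 : ℝ) * n)) := by
  have h := measureReal_count_le M n 1 (2 * n)
  refine (measureReal_mono fun ω hω => ?_).trans (h.trans (Real.exp_le_exp.2 ?_))
  · have hω' : 2 * n ≤ M.N n ω := hω
    change (2 * n : ℝ) ≤ 1 * M.N n ω
    rw [one_mul]
    exact_mod_cast hω'
  · have hn : (0 : ℝ) ≤ n := Nat.cast_nonneg n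
    have := Real.exp_one_lt_d9
    nlinarith

lemma log_factorial_le {t : ℕ} (ht : 1 ≤ t) :
    Real.log (t.factorial) ≤ t * Real.log t - t + 1 + Real.log t := by
  induction t, ht using Nat.le_induction with
  | base => simp
  | succ t ht ih =>
    have ht0 : (0 : ℝ) < t := by exact_mod_cast ht
    rw [Nat.factorial_succ]
    push_cast
    rw [Real.log_mul (by positivity) (by positivity)]
    have h := Real.one_sub_inv_le_log_of_pos (x := ((t : ℝ) + 1) / t) (by positivity)
    rw [Real.log_div (by positivity) (by positivity)] at h
    have h2 : (1 : ℝ) - (((t : ℝ) + 1) / t)⁻¹ = 1 / (t + 1) := by field_simp; ring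
    rw [h2, div_le_iff₀ (by positivity)] at h
    nlinarith

lemma one_sub_pow_ge {p : ℝ} (h1 : p < 1) (b : ℕ) :
    Real.exp (-(b * p / (1 - p))) ≤ (1 - p) ^ b := by
  have h0 : 0 < 1 - p := by linarith
  have h := Real.one_sub_inv_le_log_of_pos h0
  rw [← Real.exp_log (pow_pos h0 b), Real.log_pow]
  refine Real.exp_le_exp.2 ?_
  have h2 : -(b * p / (1 - p)) = b * (1 - (1 - p)⁻¹) := by field_simp; ring
  rw [h2]
  gcongr

lemma binTail_ge_exp {p l θ γ : ℝ} {b t : ℕ} (hp0 : 0 ≤ p) (hp1 : p < 1) (ht : 1 ≤ t) (htb : t ≤ b)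
    (hl : 0 < l) (hθ : 0 < θ) (h1 : θ * l ≤ ((b : ℝ) - t) * p) (h2 : b * p ≤ γ * l) :
    Real.exp (l * ((t / l) * (1 - Real.log (t / l) + Real.log θ) - 1 / l
      - (Real.log (t / l) / l + Real.log l / l) - γ / (1 - p))) ≤ binTail p b t := by
  have ht0 : (0 : ℝ) < t := by exact_mod_cast ht
  have hq : 0 < 1 - p := by linarith
  refine le_trans ?_ (binTail_ge hp0 hp1.le b t)
  have hch : (θ * l) ^ t / t.factorial ≤ (b.choose t : ℝ) * p ^ t := by
    have h := Nat.pow_le_choose (α := ℝ) t b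
    have h3 : ((b : ℝ) - t) ^ t / t.factorial ≤ b.choose t := by
      refine le_trans ?_ h
      have : ((b : ℝ) - t) ≤ ((b + 1 - t : ℕ) : ℝ) := by
        rw [Nat.cast_sub (by omega)]; push_cast; linarith
      have h0 : (0 : ℝ) ≤ (b : ℝ) - t := by rw [sub_nonneg]; exact_mod_cast htb
      gcongr
    calc (θ * l) ^ t / t.factorial ≤ (((b : ℝ) - t) * p) ^ t / t.factorial := by gcongr
      _ = ((b : ℝ) - t) ^ t / t.factorial * p ^ t := by rw [mul_pow]; ring
      _ ≤ _ := by gcongr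
  have hpow := one_sub_pow_ge hp1 b
  have hfac : Real.exp (t * Real.log (θ * l) - (t * Real.log t - t + 1 + Real.log t))
      ≤ (θ * l) ^ t / t.factorial := by
    rw [Real.exp_sub, ← Real.log_pow, Real.exp_log (by positivity)]
    have : (t.factorial : ℝ) ≤ Real.exp (t * Real.log t - t + 1 + Real.log t) := by
      rw [← Real.log_le_iff_le_exp (by positivity)]
      exact log_factorial_le ht
    gcongr
  calc _ ≤ Real.exp (t * Real.log (θ * l) - (t * Real.log t - t + 1 + Real.log t))
        * Real.exp (-(b * p / (1 - p))) := by
        rw [← Real.exp_add]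
        refine Real.exp_le_exp.2 ?_
        have h4 : b * p / (1 - p) ≤ γ * l / (1 - p) := by gcongr
        rw [Real.log_mul hθ.ne' hl.ne', Real.log_div ht0.ne' hl.ne']
        have h5 : l * ((t / l) * (1 - (Real.log t - Real.log l) + Real.log θ) - 1 / l
            - ((Real.log t - Real.log l) / l + Real.log l / l) - γ / (1 - p))
            = t * (1 - (Real.log t - Real.log l) + Real.log θ) - 1 - Real.log t
              - γ * l / (1 - p) := by
          field_simp
          ring
        rw [h5]
        linarith
    _ ≤ _ := by
        gcongr
        exact hfac.trans hch

lemma eventually_exp_le_binTail {p l : ℕ → ℝ} {b t : ℕ → ℕ} {γ θ τ η : ℝ} (hθ : 0 < θ)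
    (hτ : 0 < τ) (hl : Tendsto l atTop atTop) (hp : Tendsto p atTop (nhds 0))
    (hp0 : ∀ᶠ k in atTop, 0 ≤ p k) (ht : Tendsto (fun k => t k / l k) atTop (nhds τ))
    (htb : ∀ᶠ k in atTop, t k ≤ b k)
    (h1 : ∀ᶠ k in atTop, θ * l k ≤ ((b k : ℝ) - t k) * p k)
    (h2 : ∀ᶠ k in atTop, b k * p k ≤ γ * l k)
    (hη : τ * (Real.log τ - Real.log θ - 1) + γ < η) :
    ∀ᶠ k in atTop, Real.exp (-(η * l k)) ≤ binTail (p k) (b k) (t k) := by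
  have hlim : Tendsto (fun k => (t k / l k) * (1 - Real.log (t k / l k) + Real.log θ) - 1 / l k
      - (Real.log (t k / l k) / l k + Real.log (l k) / l k) - γ / (1 - p k)) atTop
      (nhds (τ * (1 - Real.log τ + Real.log θ) - 0 - (0 + 0) - γ / (1 - 0))) := by
    have hlog : Tendsto (fun k => Real.log (t k / l k)) atTop (nhds (Real.log τ)) :=
      ht.log hτ.ne'
    refine (((ht.mul ((tendsto_const_nhds.sub hlog).add_const _)).sub ?_).sub
      (Tendsto.add ?_ ?_)).sub (tendsto_const_nhds.div (tendsto_const_nhds.sub hp) (by norm_num))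
    · exact tendsto_const_nhds.div_atTop hl
    · exact hlog.div_atTop hl
    · exact (Real.isLittleO_log_id_atTop.tendsto_div_nhds_zero).comp hl
  have hev := hlim.eventually (lt_mem_nhds (a := -η) (by
    rw [sub_zero, sub_zero, div_one]; nlinarith))
  have htpos := ht.eventually (lt_mem_nhds hτ)
  filter_upwards [hev, htpos, hl.eventually_gt_atTop 0, hp0, hp.eventually (gt_mem_nhds one_pos),
    htb, h1, h2] with k a1 a2 a3 a4 a5 a6 a7 a8
  have ht1 : 1 ≤ t k := by
    rcases Nat.eq_zero_or_pos (t k) with h | h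
    · rw [h] at a2; simp at a2
    · exact h
  refine le_trans (Real.exp_le_exp.2 ?_) (binTail_ge_exp a4 a5 ht1 a6 a3 hθ a7 a8)
  nlinarith

lemma rhat_pow (hd : d ≠ 0) (M : Model d P) {γ : ℝ} (hγ : 0 ≤ γ) (n : ℕ) :
    rhat M γ n ^ d = γ * Real.log n / (M.α * n) := by
  have := M.α_pos
  have := Real.log_natCast_nonneg n
  rw [rhat, one_div, Real.rpow_inv_natCast_pow (by positivity) hd]

lemma rhat_pos (M : Model d P) {γ : ℝ} (hγ : 0 < γ) {n : ℕ} (hn : 2 ≤ n) : 0 < rhat M γ n := by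
  have := M.α_pos
  have h2 : (1 : ℝ) < n := by exact_mod_cast hn
  have := Real.log_pos h2
  have : (0 : ℝ) < n := by linarith
  unfold rhat
  positivity

lemma rhat_anti (M : Model d P) {γ : ℝ} (hγ : 0 ≤ γ) {n m : ℕ} (hn : 3 ≤ n) (hnm : n ≤ m) :
    rhat M γ m ≤ rhat M γ n := by
  have h0 := M.α_pos
  have h1 := Real.log_natCast_nonneg m
  have h3 : (3 : ℝ) ≤ n := by exact_mod_cast hn
  have h4 : (n : ℝ) ≤ m := by exact_mod_cast hnm
  have he : Real.exp 1 ≤ n := (Real.exp_one_lt_d9.le.trans (by norm_num)).trans h3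
  have h5 := Real.log_div_self_antitoneOn (mem_ofPred_eq ▸ he) (mem_ofPred_eq ▸ he.trans h4) h4
  unfold rhat
  refine Real.rpow_le_rpow (by positivity) ?_ (by positivity)
  calc γ * Real.log m / (M.α * m) = γ / M.α * (Real.log m / m) := by ring
    _ ≤ γ / M.α * (Real.log n / n) := mul_le_mul_of_nonneg_left h5 (by positivity)
    _ = _ := by ring

lemma tendsto_rhat (hd : d ≠ 0) (M : Model d P) (γ : ℝ) :
    Tendsto (rhat M γ) atTop (nhds 0) := by
  have h1 : Tendsto (fun n : ℕ => Real.log n / n) atTop (nhds 0) :=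
    (Real.isLittleO_log_id_atTop.tendsto_div_nhds_zero).comp tendsto_natCast_atTop_atTop
  have h2 : Tendsto (fun n : ℕ => γ * Real.log n / (M.α * n)) atTop (nhds 0) := by
    have := h1.const_mul (γ / M.α)
    rw [mul_zero] at this
    exact this.congr fun n => by ring
  have hd' : 0 < (1 : ℝ) / d := by positivity
  have := h2.rpow_const (p := (1 : ℝ) / d) (Or.inr hd'.le)
  rwa [Real.zero_rpow hd'.ne'] at this

lemma hits_eq_card {Y : Type*} (S : Set Y) {b : ℕ} (w : Fin b → Y) [DecidablePred (w · ∈ S)] :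
    hits S w = (Finset.univ.filter (w · ∈ S)).card := by
  classical
  rw [Finset.card_filter]
  exact Finset.sum_congr rfl fun j _ => by simp [indicator]

lemma finite_adj (M : Model d P) (n : ℕ) (r : ℝ) (ω : Ω) (i : ℕ) :
    {j | adj M n r ω i j}.Finite :=
  (finite_Iic (M.N n ω)).subset fun _ hj => hj.2.2.2.2.1

lemma le_maxDeg_of_mem_starEvent (M : Model d P) {a b n m t i : ℕ} {R r r' : ℝ} {ω : Ω}
    {I : Set (EuclideanSpace ℝ (Fin d))} (hN : a + b ≤ M.N n ω) (hi : i ∈ Finset.Icc 1 a)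
    (h : ω ∈ starEvent M I (nearSet M R r) (fun k : Fin b => a + 1 + k) t i)
    (hnm : n ≤ m) (hr : 0 < r) (hr' : r ≤ r') : t ≤ maxDeg M m r' ω := by
  classical
  obtain ⟨hi1, hia⟩ := Finset.mem_Icc.1 hi
  have hNm : a + b ≤ M.N m ω := hN.trans (M.N_mono ω hnm)
  refine le_trans ?_ (Finset.le_sup (f := deg M m r' ω)
    (Finset.mem_Icc.2 ⟨hi1, by omega⟩ : i ∈ Finset.Icc 1 (M.N m ω)))
  refine h.2.trans ?_
  rw [hits_eq_card, ← Finset.card_image_of_injective (f := fun k : Fin b => a + 1 + (k : ℕ)) _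
    (fun k k' hk => Fin.ext (by simpa using hk)), ← ncard_coe_finset]
  refine ncard_le_ncard ?_ (finite_adj M m r' ω i)
  intro j hj
  obtain ⟨k, hk, rfl⟩ := Finset.mem_image.1 (Finset.mem_coe.1 hj)
  have hk' := (Finset.mem_filter.1 hk).2
  have hkb := k.2
  refine ⟨by omega, hi1, by omega, by omega, by omega, hk'.2.trans ?_⟩
  refine M.g_antitone (mem_Ici.2 (div_nonneg (torusDist_nonneg _ _) (hr.le.trans hr')))
    (mem_Ici.2 (by positivity)) ?_
  exact div_le_div₀ (norm_nonneg _) (torusDist_le_norm _ _) hr hr'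

/-- The enumeration of the positive integers other than `i`. -/
def skip (i m : ℕ) (k : Fin m) : ℕ := if (k : ℕ) + 1 < i then k + 1 else k + 2

lemma skip_injective (i m : ℕ) : Function.Injective (skip i m) := by
  intro k k' h
  unfold skip at h
  ext
  split_ifs at h <;> omega

lemma exists_mem_starEvent_of_le_maxDeg (M : Model d P) {n m t : ℕ} {r : ℝ} {ω : Ω}
    (hN : M.N n ω ≤ m) (ht : 1 ≤ t) (h : t ≤ maxDeg M n r ω) :
    ∃ i ∈ Finset.Icc 1 m, ω ∈ starEvent M univ (torusSet M r) (skip i m) t i := by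
  classical
  obtain ⟨i, hi, hti⟩ := (Finset.le_sup_iff (by exact ht)).1 h
  obtain ⟨hi1, hiN⟩ := Finset.mem_Icc.1 hi
  refine ⟨i, Finset.mem_Icc.2 ⟨hi1, hiN.trans hN⟩, mem_univ _, hti.trans ?_⟩
  rw [hits_eq_card, ← Finset.card_image_of_injective _ (skip_injective i m), ← ncard_coe_finset]
  refine ncard_le_ncard ?_ (Finset.finite_toSet _)
  rintro j ⟨hij, -, hj1, -, hjN, hU⟩
  have hjm : j ≤ m := hjN.trans hN
  rw [Finset.mem_coe, Finset.mem_image]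
  have key : ∃ k : Fin m, skip i m k = j := by
    by_cases hji : j < i
    · refine ⟨⟨j - 1, by omega⟩, ?_⟩
      simp only [skip]
      split_ifs <;> omega
    · refine ⟨⟨j - 2, by omega⟩, ?_⟩
      simp only [skip]
      split_ifs <;> omega
  obtain ⟨k, rfl⟩ := key
  exact ⟨k, Finset.mem_filter.2 ⟨Finset.mem_univ _, hU⟩, rfl⟩

/-- Borel–Cantelli with an eventual summable bound. -/
lemma ae_eventually_notMem_of_le [IsFiniteMeasure P] {s : ℕ → Set Ω} {u : ℕ → ℝ}
    (hu : Summable u) (h : ∀ᶠ k in atTop, P.real (s k) ≤ u k) :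
    ∀ᵐ ω ∂P, ∀ᶠ k in atTop, ω ∉ s k := by
  have h1 : Summable fun k => P.real (s k) := by
    refine Summable.of_norm_bounded_eventually_nat hu (h.mono fun k hk => ?_)
    rwa [Real.norm_of_nonneg measureReal_nonneg]
  refine ae_eventually_notMem ?_
  have h2 : ∑' k, P (s k) = ENNReal.ofReal (∑' k, P.real (s k)) := by
    rw [ENNReal.ofReal_tsum_of_nonneg (fun k => measureReal_nonneg) h1]
    exact tsum_congr fun k => (ofReal_measureReal).symm
  rw [h2]
  exact ENNReal.ofReal_ne_top

lemma measureReal_starEvent_torusSet_le [IsProbabilityMeasure P] (M : Model d P) {r : ℝ}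
    (hr : 0 < r) {i : ℕ} (hi : 1 ≤ i) (m t : ℕ) :
    P.real (starEvent M univ (torusSet M r) (skip i m) t i)
      ≤ (m * (3 ^ d * (r ^ d * M.α))) ^ t / t.factorial := by
  have := isProbabilityMeasure_cubeMeasure M
  have hα := M.α_pos
  refine ENNReal.toReal_le_of_le_ofReal (by positivity) ?_
  rw [measure_starEvent M MeasurableSet.univ (measurableSet_torusSet M hr) hi
    (fun k => by unfold skip; split_ifs <;> omega) (fun k => by unfold skip; split_ifs <;> omega)
    (skip_injective i m)]
  calc _ ≤ ∫⁻ _, ENNReal.ofReal ((m * (3 ^ d * (r ^ d * M.α))) ^ t / t.factorial)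
        ∂(cubeMeasure d) := by
        refine lintegral_mono_ae ((ae_restrict_mem measurableSet_cube).mono fun x hx => ?_)
        simp only [indicator_univ]
        refine ENNReal.ofReal_le_ofReal ?_
        refine (binTail_le measureReal_nonneg measureReal_le_one m t).trans ?_
        rw [mul_pow, mul_div_right_comm]
        exact mul_le_mul (Nat.choose_le_pow_div t m) (pow_le_pow_left₀ measureReal_nonneg
          (prod_real_torusSet_le M hr hx) t) (by positivity) (by positivity)
    _ = _ := by simp

lemma measureReal_le_maxDeg_le [IsProbabilityMeasure P] (M : Model d P) {r : ℝ} (hr : 0 < r)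
    (n : ℕ) {t : ℕ} (ht : 1 ≤ t) :
    P.real {ω | t ≤ maxDeg M n r ω} ≤ Real.exp (-((1 / 4 : ℝ) * n)) +
      2 * n * ((2 * n * (3 ^ d * (r ^ d * M.α))) ^ t / t.factorial) := by
  have hsub : {ω | t ≤ maxDeg M n r ω} ⊆ {ω | 2 * n ≤ M.N n ω} ∪
      ⋃ i ∈ Finset.Icc 1 (2 * n), starEvent M univ (torusSet M r) (skip i (2 * n)) t i := by
    intro ω hω
    by_cases h : 2 * n ≤ M.N n ω
    · exact Or.inl h
    · obtain ⟨i, hi, h'⟩ := exists_mem_starEvent_of_le_maxDeg M (not_le.1 h).le ht hω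
      exact Or.inr (mem_biUnion hi h')
  refine (measureReal_mono hsub).trans ((measureReal_union_le _ _).trans
    (add_le_add (measureReal_count_gt_le M n) ?_))
  refine (measureReal_biUnion_finset_le _ _).trans ?_
  refine (Finset.sum_le_card_nsmul _ _ _ fun i hi =>
    measureReal_starEvent_torusSet_le M hr (Finset.mem_Icc.1 hi).1 (2 * n) t).trans_eq ?_
  simp

lemma pow_div_factorial_le_exp_neg {L : ℝ} {t : ℕ} (hL : 0 ≤ L) (h : L * Real.exp 3 ≤ t) :
    L ^ t / t.factorial ≤ Real.exp (-(2 * t)) := by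
  have h1 : L ≤ t * Real.exp (-3) := by
    rw [Real.exp_neg, ← div_eq_mul_inv, le_div_iff₀ (Real.exp_pos _)]; exact h
  calc L ^ t / t.factorial ≤ (t * Real.exp (-3)) ^ t / t.factorial := by gcongr
    _ = (t : ℝ) ^ t / t.factorial * Real.exp (-3) ^ t := by rw [mul_pow]; ring
    _ ≤ Real.exp t * Real.exp (-3) ^ t := by
        gcongr; exact Real.pow_div_factorial_le_exp _ (by positivity) t
    _ = _ := by rw [← Real.exp_nat_mul, ← Real.exp_add]; congr 1; ring

lemma measureReal_maxDeg_rhat_le (hd : d ≠ 0) [IsProbabilityMeasure P] (M : Model d P) {γ : ℝ}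
    (hγ : 0 < γ) {n : ℕ} (hn : 2 ≤ n) :
    P.real {ω | ⌈(2 * 3 ^ d * γ * Real.exp 3 + 1) * Real.log n⌉₊ ≤ maxDeg M n (rhat M γ n) ω}
      ≤ 6 / n := by
  have hα := M.α_pos
  have h2 : (1 : ℝ) < n := by exact_mod_cast hn
  have hlog := Real.log_pos h2
  have hn0 : (0 : ℝ) < n := by linarith
  set t := ⌈(2 * 3 ^ d * γ * Real.exp 3 + 1) * Real.log n⌉₊ with ht
  have ht1 : 1 ≤ t := Nat.one_le_ceil_iff.2 (by positivity)
  have htle : (2 * 3 ^ d * γ * Real.exp 3 + 1) * Real.log n ≤ t := Nat.le_ceil _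
  have hL : 2 * n * (3 ^ d * (rhat M γ n ^ d * M.α)) = 2 * 3 ^ d * γ * Real.log n := by
    rw [rhat_pow hd M hγ.le]; field_simp
  refine (measureReal_le_maxDeg_le M (rhat_pos M hγ hn) n ht1).trans ?_
  rw [hL]
  have h3 : (2 * 3 ^ d * γ * Real.log n) ^ t / t.factorial ≤ 1 / n ^ 2 := by
    refine (pow_div_factorial_le_exp_neg (by positivity) (by nlinarith)).trans ?_
    have h4 : Real.log n ≤ t := by
      have : 0 ≤ 2 * 3 ^ d * γ * Real.exp 3 * Real.log n := by positivity
      linarith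
    calc Real.exp (-(2 * t)) ≤ Real.exp (-(2 * Real.log n)) := by gcongr
      _ = 1 / n ^ 2 := by
        rw [Real.exp_neg, two_mul, Real.exp_add, Real.exp_log hn0, one_div, sq]
  have h5 : Real.exp (-((1 / 4 : ℝ) * n)) ≤ 4 / n := by
    rw [Real.exp_neg, inv_le_comm₀ (Real.exp_pos _) (by positivity), inv_div]
    linarith [Real.add_one_le_exp ((1 / 4 : ℝ) * n)]
  calc _ ≤ 4 / (n : ℝ) + 2 * n * (1 / n ^ 2) := by gcongr
    _ = 6 / n := by field_simp; norm_num

/-- The normalised maximum degree does not tend to infinity. -/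
lemma ae_isCoboundedUnder_maxDeg (hd : d ≠ 0) [IsProbabilityMeasure P] (M : Model d P) {γ : ℝ}
    (hγ : 0 < γ) : ∀ᵐ ω ∂P, IsCoboundedUnder (· ≥ ·) atTop
      fun n : ℕ => (maxDeg M n (rhat M γ n) ω : ℝ) / Real.log n := by
  have hs : Summable fun k : ℕ => (6 : ℝ) / (((k + 2) ^ 2 : ℕ) : ℝ) := by
    have := (summable_nat_add_iff 2).2 (Real.summable_one_div_nat_pow.2 (le_refl 2))
    exact (this.mul_left 6).congr fun k => by push_cast; ring
  have hsq : ∀ k : ℕ, k + 2 ≤ (k + 2) ^ 2 := fun k => Nat.le_self_pow two_ne_zero _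
  have h := ae_eventually_notMem_of_le hs (Eventually.of_forall fun k =>
    measureReal_maxDeg_rhat_le hd M hγ (n := (k + 2) ^ 2) (by linarith [hsq k]))
  filter_upwards [h] with ω hω
  refine IsCoboundedUnder.of_frequently_le (a := 2 * 3 ^ d * γ * Real.exp 3 + 1) ?_
  have htend : Tendsto (fun k : ℕ => (k + 2) ^ 2) atTop atTop :=
    tendsto_atTop_mono (fun k => (Nat.le_add_right k 2).trans (hsq k)) tendsto_id
  refine htend.frequently (hω.mono fun k hk => ?_).frequently
  have h2 : (1 : ℝ) < ((k + 2) ^ 2 : ℕ) := by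
    have : 1 < (k + 2) ^ 2 := by linarith [hsq k]
    exact_mod_cast this
  rw [div_le_iff₀ (Real.log_pos h2)]
  exact (Nat.lt_ceil.1 (not_le.1 hk)).le

/-- Second moment bound: some vertex among the first `a` has at least `t` neighbours among the
next `b` vertices. -/
lemma measureReal_forall_notMem_starEvent_le [IsProbabilityMeasure P] (M : Model d P)
    {R r : ℝ} (hR : 0 ≤ R) (hr : 0 < r) (hRr : R * r < 1 / 4) {a : ℕ} (ha : 1 ≤ a) (b t : ℕ)
    (hpos : 0 < binTail (r ^ d * truncMass M R) b t) :
    P.real {ω | ∀ i ∈ Finset.Icc 1 a, ω ∉ starEvent M (Metric.closedBall 0 (1 / 4))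
        (nearSet M R r) (fun k : Fin b => a + 1 + k) t i} ≤
      (1 + a * ((2 * (R * r)) ^ d *
        (volume : Measure (EuclideanSpace ℝ (Fin d))).real (Metric.ball 0 1))) /
      (a * ((cubeMeasure d).real (Metric.closedBall 0 (1 / 4)) *
        binTail (r ^ d * truncMass M R) b t)) := by
  have := isProbabilityMeasure_cubeMeasure M
  have hI : MeasurableSet (Metric.closedBall (0 : EuclideanSpace ℝ (Fin d)) (1 / 4)) :=
    Metric.isClosed_closedBall.measurableSet
  have hS := measurableSet_nearSet M R hr
  have hp : ∀ x ∈ Metric.closedBall (0 : EuclideanSpace ℝ (Fin d)) (1 / 4),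
      ((cubeMeasure d).prod unifMeasure).real (nearSet M R r x) = r ^ d * truncMass M R := by
    intro x hx
    rw [mem_closedBall_zero_iff] at hx
    exact prod_real_nearSet M hr (by linarith)
  have hp1 : r ^ d * truncMass M R ≤ 1 := by
    rw [← hp 0 (by simp)]
    exact measureReal_le_one
  have hp0 : 0 ≤ r ^ d * truncMass M R := mul_nonneg (by positivity) (truncMass_nonneg M R)
  have hinj : Function.Injective (fun k : Fin b => a + 1 + (k : ℕ)) := fun k k' h =>
    Fin.ext (by simpa using h)
  have key := measureReal_forall_notMem_le (P := P) (Finset.Icc 1 a)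
    (starEvent M (Metric.closedBall 0 (1 / 4)) (nearSet M R r) (fun k : Fin b => a + 1 + k) t)
    (fun i _ => measurableSet_starEvent M hI hS _ t i)
    (q := (cubeMeasure d).real (Metric.closedBall 0 (1 / 4)) *
        binTail (r ^ d * truncMass M R) b t)
    (κ := (2 * (R * r)) ^ d *
        (volume : Measure (EuclideanSpace ℝ (Fin d))).real (Metric.ball 0 1))
    (mul_pos cubeMeasure_real_inner_pos hpos) (by positivity) ⟨1, by simpa using ha⟩ ?_ ?_
  · simpa using key
  · intro i hi
    obtain ⟨hi1, hia⟩ := Finset.mem_Icc.1 hi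
    rw [measureReal_def, measure_starEvent M hI hS hi1 (fun k => by omega) (fun k => by omega)
      hinj, lintegral_indicator hI, setLIntegral_congr_fun hI
      (g := fun _ => ENNReal.ofReal (binTail (r ^ d * truncMass M R) b t))
      (fun x hx => by simp only [hp x hx]), setLIntegral_const, ENNReal.toReal_mul,
      ENNReal.toReal_ofReal hpos.le, mul_comm, measureReal_def]
  · intro i hi j hj hij
    obtain ⟨hi1, hia⟩ := Finset.mem_Icc.1 hi
    obtain ⟨hj1, hja⟩ := Finset.mem_Icc.1 hj
    exact measure_starEvent_inter_le M hI hS hi1 hj1 hij (fun k => by omega)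
      (fun k => by omega) (fun k => by omega) hinj t hp (fun x _ z hz => hz.1) (by positivity)
      (fun x => cubeMeasure_real_closedBall_le x (by positivity)) rfl hp0 hp1

lemma exists_slack {γ x : ℝ} (hγ : 0 < γ) (hx : 1 < x) (h : γ * H x < 1) :
    ∃ ε : ℝ, 0 < ε ∧ ε < 1 / 4 ∧
      γ * x * (Real.log (γ * x) - Real.log (γ * (1 - ε) * (1 - 3 * ε)) - 1) + γ < 1 := by
  have hc : ContinuousAt (fun ε : ℝ =>
      γ * x * (Real.log (γ * x) - Real.log (γ * (1 - ε) * (1 - 3 * ε)) - 1) + γ) 0 := by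
    have : ContinuousAt (fun ε : ℝ => Real.log (γ * (1 - ε) * (1 - 3 * ε))) 0 :=
      ContinuousAt.log (by fun_prop) (by simp [hγ.ne'])
    fun_prop
  have h0 : γ * x * (Real.log (γ * x) - Real.log (γ * (1 - 0) * (1 - 3 * 0)) - 1) + γ < 1 := by
    rw [Real.log_mul hγ.ne' (by linarith)]
    simp only [sub_zero, mul_zero, mul_one]
    unfold H at h
    linarith
  have h1 := (hc.eventually_lt continuousAt_const h0).filter_mono
    (nhdsWithin_le_nhds (s := Ioi (0 : ℝ)))
  have h2 : ∀ᶠ ε in nhdsWithin (0 : ℝ) (Ioi 0), ε < 1 / 4 :=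
    nhdsWithin_le_nhds (Iio_mem_nhds (by norm_num))
  obtain ⟨ε, ⟨hε1, hε2⟩, hε3⟩ := ((h1.and h2).and self_mem_nhdsWithin).exists
  exact ⟨ε, hε3, hε2, hε1⟩

lemma eventually_exp_le_binTail_rhat {m m' : ℕ → ℕ} (hm' : Tendsto m' atTop atTop)
    (hm : Tendsto m atTop atTop) (hle : ∀ k, m k ≤ m' k)
    (hmm' : Tendsto (fun k => (m k : ℝ) / m' k) atTop (nhds 1))
    (hd : d ≠ 0) (M : Model d P) {γ x ε η R : ℝ} (hγ : 0 < γ)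
    (hx : 0 < x) (hε0 : 0 < ε) (hε : ε < 1 / 4) (hR : (1 - ε) * M.α ≤ truncMass M R)
    (hη : γ * x * (Real.log (γ * x) - Real.log (γ * (1 - ε) * (1 - 3 * ε)) - 1) + γ < η) :
    ∀ᶠ k in atTop, Real.exp (-(η * Real.log (m' k))) ≤
      binTail (rhat M γ (m' k) ^ d * truncMass M R) ⌊(1 - 2 * ε) * m k⌋₊
        ⌈γ * x * Real.log (m' k)⌉₊ := by
  have hα := M.α_pos
  have hm'R : Tendsto (fun k => (m' k : ℝ)) atTop atTop := tendsto_natCast_atTop_atTop.comp hm'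
  have hmR : Tendsto (fun k => (m k : ℝ)) atTop atTop := tendsto_natCast_atTop_atTop.comp hm
  have hl : Tendsto (fun k => Real.log (m' k)) atTop atTop := Real.tendsto_log_atTop.comp hm'R
  have hlm : Tendsto (fun k => Real.log (m' k) / m' k) atTop (nhds 0) :=
    (Real.isLittleO_log_id_atTop.tendsto_div_nhds_zero).comp hm'R
  have ht : Tendsto (fun k => (⌈γ * x * Real.log (m' k)⌉₊ : ℝ) / Real.log (m' k)) atTop
      (nhds (γ * x)) := (tendsto_nat_ceil_mul_div_atTop (by positivity)).comp hl
  have hmpos : ∀ᶠ k in atTop, (0 : ℝ) < m k := hmR.eventually_gt_atTop 0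
  have hm'pos : ∀ᶠ k in atTop, (0 : ℝ) < m' k := hm'R.eventually_gt_atTop 0
  have hlpos : ∀ᶠ k in atTop, 0 < Real.log (m' k) := hl.eventually_gt_atTop 0
  have hb : Tendsto (fun k => (⌊(1 - 2 * ε) * m k⌋₊ : ℝ) / m' k) atTop (nhds (1 - 2 * ε)) := by
    have := ((tendsto_nat_floor_mul_div_atTop (a := 1 - 2 * ε) (by linarith)).comp hmR).mul hmm'
    rw [mul_one] at this
    refine this.congr' (hmpos.mono fun k hk => ?_)
    simp only [Function.comp]
    field_simp
  have htm : Tendsto (fun k => (⌈γ * x * Real.log (m' k)⌉₊ : ℝ) / m' k) atTop (nhds 0) := by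
    have := ht.mul hlm
    rw [mul_zero] at this
    refine this.congr' (hlpos.mono fun k hk => ?_)
    field_simp
  have hbt : ∀ᶠ k in atTop, 1 - 3 * ε ≤
      ((⌊(1 - 2 * ε) * m k⌋₊ : ℝ) - ⌈γ * x * Real.log (m' k)⌉₊) / m' k := by
    have := hb.sub htm
    rw [sub_zero] at this
    refine (this.eventually_const_lt (by linarith : 1 - 3 * ε < 1 - 2 * ε)).mono fun k hk => ?_
    rw [sub_div]
    exact hk.le
  have hT0 := truncMass_nonneg M R
  have hT1 := truncMass_le M R
  have hp : ∀ k, rhat M γ (m' k) ^ d * truncMass M R =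
      γ * (truncMass M R / M.α) * (Real.log (m' k) / m' k) := fun k => by
    rw [rhat_pow hd M hγ.le]; ring
  refine eventually_exp_le_binTail (γ := γ) (θ := γ * (1 - ε) * (1 - 3 * ε)) (τ := γ * x)
    (p := fun k => rhat M γ (m' k) ^ d * truncMass M R)
    (l := fun k => Real.log (m' k)) ?_ (by positivity) hl ?_ ?_ ht ?_ ?_ ?_ hη
  · exact mul_pos (mul_pos hγ (by linarith)) (by linarith)
  · simp_rw [hp]
    simpa using hlm.const_mul (γ * (truncMass M R / M.α))
  · refine Eventually.of_forall fun k => ?_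
    rw [rhat_pow hd M hγ.le]
    have := Real.log_natCast_nonneg (m' k)
    positivity
  · filter_upwards [hbt, hm'pos] with k hk hk'
    rw [le_div_iff₀ hk'] at hk
    have : 0 ≤ (1 - 3 * ε) * m' k := mul_nonneg (by linarith) hk'.le
    exact_mod_cast sub_nonneg.1 (this.trans hk)
  · filter_upwards [hbt, hm'pos, hlpos] with k hk hk' hkl
    rw [hp]
    have h3 : 1 - ε ≤ truncMass M R / M.α := by rwa [le_div_iff₀ hα]
    calc γ * (1 - ε) * (1 - 3 * ε) * Real.log (m' k)
        = γ * ((1 - ε) * (1 - 3 * ε)) * Real.log (m' k) := by ring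
      _ ≤ γ * (truncMass M R / M.α * (((⌊(1 - 2 * ε) * m k⌋₊ : ℝ) -
          ⌈γ * x * Real.log (m' k)⌉₊) / m' k)) * Real.log (m' k) := by
          have : (0 : ℝ) ≤ 1 - 3 * ε := by linarith
          gcongr
      _ = _ := by ring
  · filter_upwards [hm'pos, hlpos] with k hk' hkl
    rw [hp]
    have h3 : truncMass M R / M.α ≤ 1 := (div_le_one hα).2 hT1
    have h4 : (⌊(1 - 2 * ε) * m k⌋₊ : ℝ) ≤ m' k := by
      have h6 : (m k : ℝ) ≤ m' k := by exact_mod_cast hle k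
      have h7 : (0 : ℝ) ≤ m k := by positivity
      exact (Nat.floor_le (mul_nonneg (by linarith) h7)).trans (by nlinarith)
    calc (⌊(1 - 2 * ε) * m k⌋₊ : ℝ) * (γ * (truncMass M R / M.α) * (Real.log (m' k) / m' k))
        ≤ m' k * (γ * 1 * (Real.log (m' k) / m' k)) := by gcongr
      _ = _ := by field_simp

/-- The probability that no vertex has a large degree decays polynomially. -/
lemma exists_eventually_measureReal_le {m m' : ℕ → ℕ} (hm' : Tendsto m' atTop atTop)
    (hm : Tendsto m atTop atTop) (hle : ∀ k, m k ≤ m' k)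
    (hmm' : Tendsto (fun k => (m k : ℝ) / m' k) atTop (nhds 1))
    (hd : d ≠ 0) [IsProbabilityMeasure P] (M : Model d P)
    {γ x ε η R : ℝ} (hγ : 0 < γ) (hx : 0 < x) (hε0 : 0 < ε) (hε : ε < 1 / 4) (hR0 : 0 ≤ R)
    (hR : (1 - ε) * M.α ≤ truncMass M R) (hη1 : η < 1)
    (hη : γ * x * (Real.log (γ * x) - Real.log (γ * (1 - ε) * (1 - 3 * ε)) - 1) + γ < η) :
    ∃ C : ℝ, ∀ᶠ k in atTop, P.real {ω | ∀ i ∈ Finset.Icc 1 ⌊ε * m k⌋₊,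
        ω ∉ starEvent M (Metric.closedBall 0 (1 / 4)) (nearSet M R (rhat M γ (m' k)))
          (fun j : Fin ⌊(1 - 2 * ε) * m k⌋₊ => ⌊ε * m k⌋₊ + 1 + j)
          ⌈γ * x * Real.log (m' k)⌉₊ i} ≤
      C * Real.exp (-((1 - η) / 2 * Real.log (m' k))) := by
  have hα := M.α_pos
  have hm'R : Tendsto (fun k => (m' k : ℝ)) atTop atTop := tendsto_natCast_atTop_atTop.comp hm'
  have hmR : Tendsto (fun k => (m k : ℝ)) atTop atTop := tendsto_natCast_atTop_atTop.comp hm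
  have hl : Tendsto (fun k => Real.log (m' k)) atTop atTop := Real.tendsto_log_atTop.comp hm'R
  set v := (cubeMeasure d).real (Metric.closedBall 0 (1 / 4)) with hv
  have hv0 : 0 < v := cubeMeasure_real_inner_pos
  set V := (volume : Measure (EuclideanSpace ℝ (Fin d))).real (Metric.ball 0 1) with hV
  have hV0 : 0 ≤ V := measureReal_nonneg
  set D := (2 * R) ^ d * V * γ / M.α with hD
  have hD0 : 0 ≤ D := by positivity
  have hgrow : ∀ᶠ k in atTop, 1 + D * Real.log (m' k) ≤
      Real.exp ((1 - η) / 2 * Real.log (m' k)) := by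
    have h1 : Tendsto (fun y : ℝ => (1 + D * y) * Real.exp (-((1 - η) / 2) * y)) atTop
        (nhds 0) := by
      have hδ : 0 < (1 - η) / 2 := by linarith
      have e1 := tendsto_rpow_mul_exp_neg_mul_atTop_nhds_zero 0 _ hδ
      have e2 := tendsto_rpow_mul_exp_neg_mul_atTop_nhds_zero 1 _ hδ
      have := e1.add (e2.const_mul D)
      rw [mul_zero, add_zero] at this
      refine this.congr fun y => ?_
      rw [Real.rpow_zero, Real.rpow_one]; ring
    filter_upwards [(h1.comp hl).eventually_lt_const one_pos] with k hk
    simp only [Function.comp, neg_mul, Real.exp_neg] at hk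
    rw [← div_eq_mul_inv, div_lt_one (Real.exp_pos _)] at hk
    exact hk.le
  have hsmall : ∀ᶠ k in atTop, R * rhat M γ (m' k) < 1 / 4 := by
    have := ((tendsto_rhat hd M γ).comp hm').const_mul R
    rw [mul_zero] at this
    exact this.eventually_lt_const (by norm_num)
  refine ⟨4 / (ε * v), ?_⟩
  filter_upwards [hgrow, hsmall, eventually_exp_le_binTail_rhat hm' hm hle hmm' hd M hγ hx hε0 hε
    hR hη, hmR.eventually_ge_atTop (2 / ε), hm'.eventually_ge_atTop 2,
    hmm'.eventually_const_lt (by norm_num : (1 / 2 : ℝ) < 1)] with k hk1 hk2 hk3 hk4 hk5 hk6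
  have hm'0 : (0 : ℝ) < m' k := by exact_mod_cast (by omega : 0 < m' k)
  rw [lt_div_iff₀ hm'0] at hk6
  have hk4' : 2 ≤ ε * m k := by rwa [div_le_iff₀' hε0] at hk4
  have ha1 : ε * m k / 2 ≤ ⌊ε * m k⌋₊ := by linarith [Nat.lt_floor_add_one (ε * m k)]
  have ha2 : (⌊ε * m k⌋₊ : ℝ) ≤ m' k := by
    have h6 : (m k : ℝ) ≤ m' k := by exact_mod_cast hle k
    have h7 : (0 : ℝ) ≤ m k := by positivity
    exact (Nat.floor_le (by linarith)).trans (by nlinarith)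
  have ha : 1 ≤ ⌊ε * m k⌋₊ := Nat.one_le_floor_iff _ |>.2 (by linarith)
  have hBpos := (Real.exp_pos _).trans_le hk3
  refine (measureReal_forall_notMem_starEvent_le M hR0 (rhat_pos M hγ hk5) hk2 ha _ _
    hBpos).trans ?_
  rw [← hv, ← hV]
  set B := binTail (rhat M γ (m' k) ^ d * truncMass M R) ⌊(1 - 2 * ε) * m k⌋₊
    ⌈γ * x * Real.log (m' k)⌉₊ with hB
  set l := Real.log (m' k) with hldef
  have hexp : (m' k : ℝ) = Real.exp l := (Real.exp_log hm'0).symm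
  have hl0 : 0 ≤ l := Real.log_natCast_nonneg _
  have hκ : (2 * (R * rhat M γ (m' k))) ^ d * V = D * l / m' k := by
    rw [← mul_assoc, mul_pow, rhat_pow hd M hγ.le, hD, ← hldef]
    field_simp
  have hnum : 1 + (⌊ε * m k⌋₊ : ℝ) * ((2 * (R * rhat M γ (m' k))) ^ d * V) ≤
      Real.exp ((1 - η) / 2 * l) := by
    rw [hκ]
    refine le_trans (add_le_add le_rfl ?_) hk1
    calc (⌊ε * m k⌋₊ : ℝ) * (D * l / m' k) ≤ m' k * (D * l / m' k) := by gcongr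
      _ = D * l := by field_simp
  have hden : ε * v / 4 * Real.exp ((1 - η) * l) ≤ ⌊ε * m k⌋₊ * (v * B) := by
    calc ε * v / 4 * Real.exp ((1 - η) * l) = (ε / 4 * m' k) * (v * Real.exp (-(η * l))) := by
          rw [hexp, show (1 - η) * l = l + -(η * l) by ring, Real.exp_add]; ring
      _ ≤ _ := by
          gcongr
          nlinarith
  calc _ ≤ Real.exp ((1 - η) / 2 * l) / (ε * v / 4 * Real.exp ((1 - η) * l)) := by gcongr
    _ = 4 / (ε * v) * Real.exp (-((1 - η) / 2 * l)) := by
      rw [show (1 - η) * l = (1 - η) / 2 * l + (1 - η) / 2 * l by ring, Real.exp_add,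
        Real.exp_neg]
      field_simp

lemma tendsto_pow_ratio (s : ℕ) :
    Tendsto (fun k : ℕ => (((k + 1) ^ s : ℕ) : ℝ) / ((k + 2) ^ s : ℕ)) atTop (nhds 1) := by
  have h1 : Tendsto (fun k : ℕ => ((k + 1 : ℕ) : ℝ) / ((k + 1 : ℕ) + 1)) atTop (nhds 1) :=
    (tendsto_natCast_div_add_atTop (1 : ℝ)).comp (tendsto_add_atTop_nat 1)
  have h2 := h1.pow s
  rw [one_pow] at h2
  refine h2.congr fun k => ?_
  rw [div_pow]
  push_cast
  ring

lemma exists_pow_le_lt {s : ℕ} (hs : s ≠ 0) {n : ℕ} (hn : 1 ≤ n) :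
    ∃ k : ℕ, (k + 1) ^ s ≤ n ∧ n < (k + 2) ^ s := by
  classical
  have hex : ∃ k : ℕ, n < (k + 2) ^ s :=
    ⟨n, lt_of_lt_of_le (by omega) (Nat.le_self_pow hs (n + 2))⟩
  refine ⟨Nat.find hex, ?_, Nat.find_spec hex⟩
  rcases h : Nat.find hex with _ | k
  · simpa using hn
  · exact not_lt.1 (Nat.find_min hex (h ▸ Nat.lt_succ_self k))

lemma ae_eventually_le_maxDeg (hd : d ≠ 0) [IsProbabilityMeasure P] (M : Model d P)
    {γ x : ℝ} (hγ : 0 < γ) (hx : 1 < x) (hH : γ * H x < 1) :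
    ∀ᵐ ω ∂P, ∀ᶠ n : ℕ in atTop, γ * x * Real.log n ≤ maxDeg M n (rhat M γ n) ω := by
  have hx0 : 0 < x := by linarith
  have hα := M.α_pos
  obtain ⟨ε, hε0, hε, hlt⟩ := exists_slack hγ hx hH
  obtain ⟨η, hη, hη1⟩ := exists_between hlt
  obtain ⟨R, hR, hR0⟩ := (((tendsto_truncMass M).eventually_const_lt
    (by nlinarith : (1 - ε) * M.α < M.α)).and (eventually_ge_atTop 0)).exists
  obtain ⟨s, hs⟩ := exists_nat_ge (4 / (1 - η))
  have hs4 : 4 ≤ s * (1 - η) := by rwa [div_le_iff₀ (by linarith)] at hs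
  have hs0 : s ≠ 0 := by rintro rfl; norm_num at hs4
  have hm : Tendsto (fun k : ℕ => (k + 1) ^ s) atTop atTop :=
    tendsto_atTop_mono (fun k => (Nat.le_succ k).trans (Nat.le_self_pow hs0 _)) tendsto_id
  have hm' : Tendsto (fun k : ℕ => (k + 2) ^ s) atTop atTop :=
    hm.comp (tendsto_add_atTop_nat 1)
  have hle : ∀ k : ℕ, (k + 1) ^ s ≤ (k + 2) ^ s := fun k => Nat.pow_le_pow_left (by omega) s
  obtain ⟨C, hC⟩ := exists_eventually_measureReal_le hm' hm hle (tendsto_pow_ratio s) hd M hγ hx0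
    hε0 hε hR0 hR.le hη1 hη
  have hdecay : ∀ k : ℕ, Real.exp (-((1 - η) / 2 * Real.log ((k + 2) ^ s : ℕ))) ≤
      1 / (((k + 2 : ℕ) : ℝ)) ^ 2 := by
    intro k
    have h2 : (1 : ℝ) < (k + 2 : ℕ) := by exact_mod_cast (by omega : 1 < k + 2)
    have hlog := Real.log_pos h2
    have h3 : 1 / (((k + 2 : ℕ) : ℝ)) ^ 2 = Real.exp (-(2 * Real.log (k + 2 : ℕ))) := by
      rw [Real.exp_neg, two_mul, Real.exp_add, Real.exp_log (by linarith), one_div, sq]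
    rw [h3, Nat.cast_pow, Real.log_pow]
    refine Real.exp_le_exp.2 ?_
    nlinarith
  have hsum : Summable fun k : ℕ =>
      C * Real.exp (-((1 - η) / 2 * Real.log ((k + 2) ^ s : ℕ))) :=
    (Summable.of_nonneg_of_le (fun _ => (Real.exp_pos _).le) hdecay
      ((summable_nat_add_iff 2).2 (Real.summable_one_div_nat_pow.2 (le_refl 2)))).mul_left C
  have hsum' : Summable fun k : ℕ => Real.exp (k * -(ε ^ 3 / 2)) :=
    Real.summable_exp_nat_mul_iff.2 (by simp; positivity)
  have hcount : ∀ k : ℕ, P.real {ω | (M.N ((k + 1) ^ s) ω : ℝ) < (1 - ε) * ((k + 1) ^ s : ℕ)} ≤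
      Real.exp (k * -(ε ^ 3 / 2)) := by
    intro k
    refine (measureReal_count_lt_le M _ hε0 (by linarith)).trans (Real.exp_le_exp.2 ?_)
    have h1 : (k : ℝ) ≤ ((k + 1) ^ s : ℕ) := by
      exact_mod_cast (Nat.le_succ k).trans (Nat.le_self_pow hs0 _)
    have := mul_le_mul_of_nonneg_left h1 (by positivity : 0 ≤ ε ^ 3 / 2)
    linarith
  filter_upwards [ae_eventually_notMem_of_le hsum hC,
    ae_eventually_notMem_of_le hsum' (Eventually.of_forall hcount)] with ω h1 h2
  obtain ⟨K, hK⟩ := eventually_atTop.1 (h1.and h2)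
  filter_upwards [eventually_ge_atTop (max 3 ((K + 2) ^ s))] with n hn
  obtain ⟨hn3, hnK⟩ := max_le_iff.1 hn
  obtain ⟨k, hk1, hk2⟩ := exists_pow_le_lt hs0 (by omega : 1 ≤ n)
  have hkK : K ≤ k := by
    have := lt_of_pow_lt_pow_left₀ s (Nat.zero_le _) (hnK.trans_lt hk2)
    omega
  obtain ⟨hB, hN⟩ := hK k hkK
  simp only [not_forall, not_not, not_lt] at hB hN
  obtain ⟨i, hi, hmem⟩ := hB
  have hnum : ⌊ε * ((k + 1) ^ s : ℕ)⌋₊ + ⌊(1 - 2 * ε) * ((k + 1) ^ s : ℕ)⌋₊ ≤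
      M.N ((k + 1) ^ s) ω := by
    have hpos : (0 : ℝ) ≤ ((k + 1) ^ s : ℕ) := by positivity
    have e1 := Nat.floor_le (mul_nonneg hε0.le hpos)
    have e2 := Nat.floor_le (mul_nonneg (by linarith : 0 ≤ 1 - 2 * ε) hpos)
    have e3 : ((⌊ε * ((k + 1) ^ s : ℕ)⌋₊ : ℝ) + ⌊(1 - 2 * ε) * ((k + 1) ^ s : ℕ)⌋₊) ≤
      M.N ((k + 1) ^ s) ω := by linarith
    exact_mod_cast e3
  have hfin := le_maxDeg_of_mem_starEvent M hnum hi hmem hk1 (rhat_pos M hγ (by omega))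
    (rhat_anti M hγ.le hn3 hk2.le)
  have hn0 : (0 : ℝ) < n := by exact_mod_cast (by omega : 0 < n)
  calc γ * x * Real.log n ≤ γ * x * Real.log ((k + 2) ^ s : ℕ) := by
        gcongr
    _ ≤ ⌈γ * x * Real.log ((k + 2) ^ s : ℕ)⌉₊ := Nat.le_ceil _
    _ ≤ _ := by exact_mod_cast hfin

lemma H_lt_of_lt_Hplusinv {x y : ℝ} (hx : 1 ≤ x) (h : x < Hplusinv y) : H x < y := by
  have := notMem_of_lt_csInf h ⟨1, fun z hz => hz.1⟩
  by_contra hc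
  exact this ⟨hx, not_lt.1 hc⟩

lemma one_lt_Hplusinv {y : ℝ} (hy : 0 < y) : 1 < Hplusinv y := by
  have hc : ContinuousAt H 1 := by
    have : ContinuousAt Real.log 1 := Real.continuousAt_log one_ne_zero
    unfold H
    fun_prop
  have h1 : H 1 < y := by simpa [H] using hy
  obtain ⟨δ, hδ, hball⟩ := Metric.eventually_nhds_iff.1 (hc.eventually_lt continuousAt_const h1)
  have hne : {x : ℝ | 1 ≤ x ∧ y ≤ H x}.Nonempty := by
    refine ⟨Real.exp (2 + y), Real.one_le_exp (by linarith), ?_⟩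
    unfold H
    rw [Real.log_exp]
    have := Real.one_le_exp (by linarith : 0 ≤ 2 + y)
    nlinarith
  refine (by linarith : (1 : ℝ) < 1 + δ).trans_le (le_csInf hne fun x hx => ?_)
  by_contra hlt
  refine absurd (hball (y := x) ?_) (not_lt.2 hx.2)
  rw [Real.dist_eq, abs_of_nonneg (by linarith [hx.1])]
  linarith

/-- Theorem 3(iii): a.s. `liminf Δ_n/log n ≥ γ H₊⁻¹((c-3d)/(γ(c-d)))`. -/
theorem maxDeg_liminf_ge (hd : 2 ≤ d) [IsProbabilityMeasure P] (M : Model d P)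
    {c : ℝ} (hc : (3 : ℝ) * d < c)
    (hg : M.g =o[atTop] fun r : ℝ => r ^ (-c))
    {γ : ℝ} (hγ : 0 < γ) :
    ∀ᵐ ω ∂P, γ * Hplusinv ((c - 3 * d) / (γ * (c - d))) ≤ Filter.liminf
      (fun n : ℕ => (maxDeg M n (rhat M γ n) ω : ℝ) / Real.log n) atTop := by
  have hd0 : d ≠ 0 := by omega
  have hdR : (0 : ℝ) < d := by exact_mod_cast (by omega : 0 < d)
  set y := (c - 3 * d) / (γ * (c - d)) with hy
  have hcd : 0 < c - d := by linarith
  have hy0 : 0 < y := div_pos (by linarith) (mul_pos hγ hcd)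
  have hy1 : γ * y < 1 := by
    have : γ * y = (c - 3 * d) / (c - d) := by rw [hy]; field_simp
    rw [this, div_lt_one hcd]
    linarith
  obtain ⟨u, -, hu, hulim⟩ := exists_seq_strictMono_tendsto' (one_lt_Hplusinv hy0)
  have hall : ∀ᵐ ω ∂P, ∀ j, ∀ᶠ n : ℕ in atTop,
      γ * u j * Real.log n ≤ maxDeg M n (rhat M γ n) ω := by
    refine ae_all_iff.2 fun j => ae_eventually_le_maxDeg hd0 M hγ (hu j).1 ?_
    have := H_lt_of_lt_Hplusinv (hu j).1.le (hu j).2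
    nlinarith
  filter_upwards [hall, ae_isCoboundedUnder_maxDeg hd0 M hγ] with ω hω hcob
  refine le_of_tendsto (hulim.const_mul γ) (Eventually.of_forall fun j => ?_)
  refine le_liminf_of_le hcob ?_
  filter_upwards [hω j, eventually_ge_atTop 2] with n hn hn2
  rwa [le_div_iff₀ (Real.log_pos (by exact_mod_cast hn2))]

end RCM
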